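/- arXiv:2509.02269 — 7 statements merged into one kernel-verified Lean document; each statement's English description precedes it below -/
import Mathlib

section
/- As ε > 0 tends to 0, the number of unordered pairs {α, β} of rational Farey neighbours with α, β ∈ [0, 1] and |β − α| ≥ ε equals (6/π²)·(−ln ε)/ε + O(ε⁻¹). -/
/-!
A Farey pair `p/q < r/s` in lowest terms satisfies `q r - p s = 1`, so its length is `1 / (q s)`.
For every coprime pair `(q, s)` of positive integers there is exactly one such Farey pair in
`[0, 1]`, because `r` is the inverse of `q` modulo `s` in the range `[1, s]`. Hence the count equals
the number `C(x)` of coprime pairs with `q s ≤ x`, where `x = 1 / ε` (`fareyCountQ_eq_card`).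

Let `D(y)` be the number of all pairs of positive integers with product at most `y`. Möbius
inversion gives `C(x) = ∑ μ(d) D(x / d²)` (`card_coprime`), and comparison with harmonic sums gives
`|D(y) - y log y| ≤ y` for `y ≥ 1` (`card_hyp_bound`). Consequently
`|D(x / d²) - (x / d²) log x| ≤ x (1 + 2 log d) / d²` for all `d ≥ 1` (`hyp_term_bound`), whether or
not `d² ≤ x`. Summing over `d`, with `∑ μ(d) / d² = 1 / ζ(2) = 6 / π²` (`hasSum_moebius`), yields
`C(x) = (6 / π²) x log x + O(x)` (`coprime_count_bound`).
-/

noncomputable section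
open scoped Classical
open Filter Real

/-- The point `p/q` of the projective line `ℙ¹(K) = K ∪ {∞}`, with the convention
`a/0 = ∞`. -/
def projPt {K : Type*} [Field K] (p q : K) : OnePoint K :=
  if q = 0 then OnePoint.infty else ((p / q : K) : OnePoint K)

/-- Two elements of `ℙ¹(ℚ) = ℚ ∪ {∞}` are Farey neighbours if they are distinct and there
exist `p, q, r, s ∈ ℤ` with `α = p/q`, `β = r/s` and `|ps - qr| = 1`. -/
def FareyQ (α β : OnePoint ℚ) : Prop :=
  α ≠ β ∧ ∃ p q r s : ℤ,
    α = projPt (p : ℚ) (q : ℚ) ∧ β = projPt (r : ℚ) (s : ℚ) ∧ |p * s - q * r| = 1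

/-- The number of unordered pairs `{α, β}` of rational Farey neighbours with
`α, β ∈ [0, 1]` and `|β - α| ≥ ε`. -/
def fareyCountQ (ε : ℝ) : ℕ :=
  Set.ncard {S : Sym2 ℚ | ∃ α β : ℚ, S = s(α, β) ∧
    FareyQ (α : OnePoint ℚ) (β : OnePoint ℚ) ∧
    α ∈ Set.Icc (0 : ℚ) 1 ∧ β ∈ Set.Icc (0 : ℚ) 1 ∧ ε ≤ |(β : ℝ) - (α : ℝ)|}

/-! ### Lattice points under the hyperbola -/

/-- The pairs of positive integers `(a, b)` with `a * b ≤ N`. -/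
def hyp (N : ℕ) : Finset (ℕ × ℕ) :=
  (Finset.Icc 1 N ×ˢ Finset.Icc 1 N).filter fun p => p.1 * p.2 ≤ N

lemma mem_hyp {N : ℕ} {p : ℕ × ℕ} : p ∈ hyp N ↔ 1 ≤ p.1 ∧ 1 ≤ p.2 ∧ p.1 * p.2 ≤ N := by
  simp only [hyp, Finset.mem_filter, Finset.mem_product, Finset.mem_Icc]
  constructor
  · tauto
  · rintro ⟨h1, h2, h3⟩
    exact ⟨⟨⟨h1, by nlinarith⟩, ⟨h2, by nlinarith⟩⟩, h3⟩

lemma card_hyp (N : ℕ) : (hyp N).card = ∑ a ∈ Finset.Icc 1 N, N / a := by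
  rw [hyp, Finset.card_filter, Finset.sum_product]
  refine Finset.sum_congr rfl fun a ha => ?_
  have ha1 := (Finset.mem_Icc.1 ha).1
  rw [← Finset.card_filter]
  have : (Finset.Icc 1 N).filter (fun b => a * b ≤ N) = Finset.Icc 1 (N / a) := by
    ext b
    simp only [Finset.mem_filter, Finset.mem_Icc, Nat.le_div_iff_mul_le ha1, mul_comm b a]
    constructor
    · tauto
    · rintro ⟨h1, h2⟩
      exact ⟨⟨h1, by nlinarith⟩, h2⟩
  rw [this]; simp

/-- Dirichlet's divisor estimate in its weak form `∑_{n ≤ y} τ(n) = y log y + O(y)`. -/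
lemma card_hyp_bound {y : ℝ} (hy : 1 ≤ y) :
    |((hyp ⌊y⌋₊).card : ℝ) - y * Real.log y| ≤ y := by
  have hM : 1 ≤ ⌊y⌋₊ := (Nat.one_le_floor_iff y).2 hy
  have hMy : (⌊y⌋₊ : ℝ) ≤ y := Nat.floor_le (by linarith)
  have hlt : y < ⌊y⌋₊ + 1 := Nat.lt_floor_add_one y
  have hH : ∑ a ∈ Finset.Icc 1 ⌊y⌋₊, y / a = y * (harmonic ⌊y⌋₊ : ℝ) := by
    rw [harmonic_eq_sum_Icc]
    push_cast
    rw [Finset.mul_sum]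
    rfl
  have h1 := log_add_one_le_harmonic ⌊y⌋₊
  have h2 := harmonic_le_one_add_log ⌊y⌋₊
  have h3 : Real.log y ≤ Real.log (⌊y⌋₊ + 1 : ℕ) :=
    Real.log_le_log (by linarith) (by push_cast; linarith)
  have h4 : Real.log ⌊y⌋₊ ≤ Real.log y :=
    Real.log_le_log (by exact_mod_cast hM) hMy
  have hup : ((hyp ⌊y⌋₊).card : ℝ) ≤ y * (harmonic ⌊y⌋₊ : ℝ) := by
    rw [card_hyp, ← hH]
    push_cast
    refine Finset.sum_le_sum fun a _ => ?_
    rw [← Nat.floor_div_natCast]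
    exact Nat.floor_le (by positivity)
  have hlo : y * (harmonic ⌊y⌋₊ : ℝ) - ⌊y⌋₊ ≤ ((hyp ⌊y⌋₊).card : ℝ) := by
    have : (⌊y⌋₊ : ℝ) = ∑ a ∈ Finset.Icc 1 ⌊y⌋₊, (1 : ℝ) := by simp
    rw [card_hyp, ← hH, sub_le_iff_le_add]
    rw [this]
    push_cast
    rw [← Finset.sum_add_distrib]
    refine Finset.sum_le_sum fun a _ => ?_
    rw [← Nat.floor_div_natCast]
    exact (Nat.lt_floor_add_one _).le
  rw [abs_le]
  constructor <;> nlinarith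

/-- The divisor-problem estimate for `x / d²` with main term `(x / d²) log x` in place of
`(x / d²) log (x / d²)`, valid also when `x < d²`: there the count is zero and
`log x ≤ 2 log d`. This uniformity in `d` allows summation over all `d`. -/
lemma hyp_term_bound {x : ℝ} (hx : 1 ≤ x) {d : ℕ} (hd : 1 ≤ d) :
    |((hyp (⌊x⌋₊ / d ^ 2)).card : ℝ) - x / d ^ 2 * Real.log x| ≤
      x * ((1 + 2 * Real.log d) / d ^ 2) := by
  have hd' : (1 : ℝ) ≤ d := by exact_mod_cast hd
  have hlx := Real.log_nonneg hx
  have hld := Real.log_nonneg hd'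
  have hfl : ⌊x⌋₊ / d ^ 2 = ⌊x / (d : ℝ) ^ 2⌋₊ := by
    rw [← Nat.floor_div_natCast]; push_cast; rfl
  have hy0 : 0 < x / (d : ℝ) ^ 2 := by positivity
  have hlog : Real.log (x / (d : ℝ) ^ 2) = Real.log x - 2 * Real.log d := by
    rw [Real.log_div (by positivity) (by positivity), Real.log_pow]; push_cast; rfl
  have hr : x * ((1 + 2 * Real.log d) / d ^ 2) = x / d ^ 2 * (1 + 2 * Real.log d) := by ring
  rw [hfl, hr]
  rcases le_or_gt 1 (x / (d : ℝ) ^ 2) with h | h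
  · have := card_hyp_bound h
    rw [hlog] at this
    rw [abs_le] at this ⊢
    constructor <;> nlinarith
  · have hz : ⌊x / (d : ℝ) ^ 2⌋₊ = 0 := Nat.floor_eq_zero.2 h
    have hneg := Real.log_neg hy0 h
    rw [hz, hlog] at *
    have : (hyp 0).card = 0 := by simp [card_hyp]
    rw [this, Nat.cast_zero, zero_sub, abs_neg, abs_of_nonneg (by positivity)]
    gcongr
    linarith

lemma summable_err : Summable fun d : ℕ => (1 + 2 * Real.log d) / (d : ℝ) ^ 2 := by
  have h1 : Summable fun d : ℕ => 1 / (d : ℝ) ^ 2 := Real.summable_one_div_nat_pow.2 (by norm_num)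
  have h2 : Summable fun d : ℕ => 1 / (d : ℝ) ^ (3 / 2 : ℝ) :=
    Real.summable_one_div_nat_rpow.2 (by norm_num)
  refine Summable.of_nonneg_of_le (fun d => ?_) (fun d => ?_) (h1.add (h2.mul_left 4))
  · have := Real.log_natCast_nonneg d
    positivity
  · rcases Nat.eq_zero_or_pos d with rfl | hd
    · simp
    have hd' : (0 : ℝ) < d := by exact_mod_cast hd
    have hl := Real.log_le_rpow_div hd'.le (show (0 : ℝ) < 1 / 2 by norm_num)
    have he : (d : ℝ) ^ (1 / 2 : ℝ) / (d : ℝ) ^ 2 = 1 / (d : ℝ) ^ (3 / 2 : ℝ) := by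
      rw [← Real.rpow_natCast, ← Real.rpow_sub hd', one_div (_ ^ _), ← Real.rpow_neg hd'.le]
      norm_num
    calc (1 + 2 * Real.log d) / (d : ℝ) ^ 2
        ≤ (1 + 4 * (d : ℝ) ^ (1 / 2 : ℝ)) / (d : ℝ) ^ 2 := by
          refine div_le_div_of_nonneg_right ?_ (by positivity)
          linarith
      _ = 1 / (d : ℝ) ^ 2 + 4 * ((d : ℝ) ^ (1 / 2 : ℝ) / (d : ℝ) ^ 2) := by ring
      _ = _ := by rw [he]

/-! ### Coprime lattice points under the hyperbola -/

lemma card_hyp_dvd (N : ℕ) {d : ℕ} (hd : 1 ≤ d) :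
    ((hyp N).filter fun p => d ∣ p.1 ∧ d ∣ p.2).card = (hyp (N / d ^ 2)).card := by
  symm
  have hd2 : 0 < d ^ 2 := by positivity
  refine Finset.card_bij (fun p _ => (d * p.1, d * p.2)) ?_ ?_ ?_
  · rintro ⟨a, b⟩ h
    obtain ⟨h1, h2, h3⟩ := mem_hyp.1 h
    rw [Nat.le_div_iff_mul_le hd2] at h3
    simp only [Finset.mem_filter, mem_hyp] at *
    exact ⟨⟨by nlinarith, by nlinarith, by nlinarith⟩, dvd_mul_right _ _, dvd_mul_right _ _⟩
  · rintro ⟨a, b⟩ _ ⟨a', b'⟩ _ h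
    simp only [Prod.mk.injEq] at h ⊢
    exact ⟨Nat.eq_of_mul_eq_mul_left hd h.1, Nat.eq_of_mul_eq_mul_left hd h.2⟩
  · rintro ⟨a, b⟩ h
    obtain ⟨h, ⟨a, rfl⟩, ⟨b, rfl⟩⟩ := Finset.mem_filter.1 h
    obtain ⟨h1, h2, h3⟩ := mem_hyp.1 h
    refine ⟨(a, b), mem_hyp.2 ⟨Nat.pos_of_mul_pos_left h1, Nat.pos_of_mul_pos_left h2, ?_⟩, rfl⟩
    rw [Nat.le_div_iff_mul_le hd2]
    dsimp only at *
    nlinarith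

/-- Möbius inversion over the common divisor `d` of the two coordinates. -/
lemma card_coprime (N : ℕ) :
    (((hyp N).filter fun p => p.1.Coprime p.2).card : ℤ) =
      ∑ d ∈ Finset.Icc 1 N, ArithmeticFunction.moebius d * ((hyp (N / d ^ 2)).card : ℤ) := by
  have key : ∀ p ∈ hyp N, (if p.1.Coprime p.2 then (1 : ℤ) else 0) =
      ∑ d ∈ Finset.Icc 1 N, if d ∣ p.1 ∧ d ∣ p.2 then ArithmeticFunction.moebius d else 0 := by
    rintro ⟨a, b⟩ h
    obtain ⟨h1, h2, h3⟩ := mem_hyp.1 h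
    dsimp only at *
    have hg := congrArg (fun f => f (a.gcd b)) ArithmeticFunction.moebius_mul_coe_zeta
    simp only [ArithmeticFunction.coe_mul_zeta_apply,
      ArithmeticFunction.one_apply] at hg
    simp only [Nat.coprime_iff_gcd_eq_one]
    rw [← hg, ← Finset.sum_filter]
    refine Finset.sum_congr ?_ fun _ _ => rfl
    ext d
    simp only [Nat.mem_divisors, Finset.mem_filter, Finset.mem_Icc, Nat.dvd_gcd_iff]
    constructor
    · rintro ⟨⟨ha, hb⟩, -⟩
      have := Nat.le_of_dvd h1 ha
      exact ⟨⟨Nat.pos_of_dvd_of_pos ha h1, by nlinarith⟩, ha, hb⟩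
    · rintro ⟨-, hab⟩
      exact ⟨hab, (Nat.gcd_pos_of_pos_left _ h1).ne'⟩
  rw [Finset.card_filter]
  push_cast
  rw [Finset.sum_congr rfl key, Finset.sum_comm]
  refine Finset.sum_congr rfl fun d hd => ?_
  rw [← card_hyp_dvd N (Finset.mem_Icc.1 hd).1, ← Finset.sum_filter, Finset.sum_const,
    nsmul_eq_mul, mul_comm]

/-- `∑ μ(d) / d² = 1 / ζ(2) = 6 / π²`. -/
lemma hasSum_moebius : HasSum (fun d : ℕ => (ArithmeticFunction.moebius d : ℝ) / (d : ℝ) ^ 2)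
    (6 / π ^ 2) := by
  have hs : 1 < (2 : ℂ).re := by norm_num
  have h := (ArithmeticFunction.LSeriesSummable_moebius_iff.2 hs).LSeriesHasSum
  have h2 := ArithmeticFunction.LSeries_zeta_mul_Lseries_moebius hs
  rw [ArithmeticFunction.LSeries_zeta_eq_riemannZeta hs, riemannZeta_two] at h2
  have hpi : (π : ℂ) ≠ 0 := by exact_mod_cast Real.pi_ne_zero
  have h3 : LSeries (fun n => (ArithmeticFunction.moebius n : ℂ)) 2 = ((6 / π ^ 2 : ℝ) : ℂ) := by
    push_cast
    field_simp at h2 ⊢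
    linear_combination h2
  rw [h3, LSeriesHasSum] at h
  rw [← Complex.hasSum_ofReal]
  convert h using 1
  ext d
  rcases eq_or_ne d 0 with rfl | hd
  · simp
  · simp [LSeries.term_of_ne_zero hd]

lemma coprime_count_bound : ∃ K : ℝ, ∀ x : ℝ, 1 ≤ x →
    |(((hyp ⌊x⌋₊).filter fun p => p.1.Coprime p.2).card : ℝ) - 6 / π ^ 2 * (x * Real.log x)|
      ≤ K * x := by
  -- The constant is the sum of the termwise errors of `hyp_term_bound`.
  refine ⟨∑' d : ℕ, (1 + 2 * Real.log d) / (d : ℝ) ^ 2, fun x hx => ?_⟩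
  have hC : HasSum (fun d : ℕ => (ArithmeticFunction.moebius d : ℝ) *
      ((hyp (⌊x⌋₊ / d ^ 2)).card : ℝ))
      (((hyp ⌊x⌋₊).filter fun p => p.1.Coprime p.2).card : ℝ) := by
    have h := congrArg (fun z : ℤ => (z : ℝ)) (card_coprime ⌊x⌋₊)
    push_cast at h
    rw [h]
    -- For `d > ⌊x⌋₊` the quotient `⌊x⌋₊ / d ^ 2` vanishes; at `d = 0` the Möbius factor does.
    refine hasSum_sum_of_ne_finset_zero fun d hd => ?_
    rcases Nat.eq_zero_or_pos d with rfl | hd1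
    · simp
    have : ⌊x⌋₊ / d ^ 2 = 0 := by
      refine Nat.div_eq_of_lt ?_
      simp only [Finset.mem_Icc, not_and, not_le] at hd
      nlinarith [hd hd1]
    rw [this]
    simp [card_hyp]
  have hD := hC.sub (hasSum_moebius.mul_right (x * Real.log x))
  have hE := summable_err.hasSum.mul_left x
  rw [← Real.norm_eq_abs, ← hD.tsum_eq, mul_comm _ x]
  refine tsum_of_norm_bounded hE fun d => ?_
  rcases Nat.eq_zero_or_pos d with rfl | hd
  · simp
  have hmu : |(ArithmeticFunction.moebius d : ℝ)| ≤ 1 := by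
    exact_mod_cast ArithmeticFunction.abs_moebius_le_one
  have he : (ArithmeticFunction.moebius d : ℝ) * ((hyp (⌊x⌋₊ / d ^ 2)).card : ℝ) -
      (ArithmeticFunction.moebius d : ℝ) / (d : ℝ) ^ 2 * (x * Real.log x) =
      (ArithmeticFunction.moebius d : ℝ) *
        (((hyp (⌊x⌋₊ / d ^ 2)).card : ℝ) - x / d ^ 2 * Real.log x) := by ring
  rw [he, Real.norm_eq_abs, abs_mul]
  calc _ ≤ 1 * |((hyp (⌊x⌋₊ / d ^ 2)).card : ℝ) - x / d ^ 2 * Real.log x| := by gcongr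
    _ ≤ _ := by rw [one_mul]; exact hyp_term_bound hx hd

/-! ### Farey pairs and their denominators -/

/-- The Farey pairs `α < β` in `[0, 1]` at distance at least `ε`, as ordered pairs. With fractions
in lowest terms the determinant condition makes the distance `1 / (α.den * β.den)`, which gives
the last inequality; `α < β` also follows from it, so only the two outer bounds are required. -/
def orderedPairs (ε : ℝ) : Set (ℚ × ℚ) :=
  {x | 0 ≤ x.1 ∧ x.2 ≤ 1 ∧ x.2.num * x.1.den - x.1.num * x.2.den = 1 ∧
    ε * (x.1.den * x.2.den) ≤ 1}

lemma sub_eq_of_det {α β : ℚ} (h : β.num * α.den - α.num * β.den = 1) :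
    β - α = 1 / (α.den * β.den) := by
  have h1 : (α.den : ℚ) ≠ 0 := by exact_mod_cast α.den_ne_zero
  have h2 : (β.den : ℚ) ≠ 0 := by exact_mod_cast β.den_ne_zero
  have h' : (β.num : ℚ) * α.den - α.num * β.den = 1 := by exact_mod_cast h
  rw [← h']
  nth_rewrite 1 [← Rat.num_div_den β, ← Rat.num_div_den α]
  field_simp

lemma lt_of_det {α β : ℚ} (h : β.num * α.den - α.num * β.den = 1) : α < β := by
  have h1 : (0 : ℚ) < α.den := by exact_mod_cast α.den_pos
  have h2 : (0 : ℚ) < β.den := by exact_mod_cast β.den_pos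
  have := sub_eq_of_det h
  have h3 : 0 < β - α := by rw [this]; positivity
  linarith

/-- A fraction `p / q` with `p`, `q` coprime is in lowest terms up to a common sign. -/
lemma num_den_of_coprime {p q : ℤ} (hq : q ≠ 0) (h : IsCoprime p q) :
    ((p / q : ℚ).num = p ∧ ((p / q : ℚ).den : ℤ) = q) ∨
      ((p / q : ℚ).num = -p ∧ ((p / q : ℚ).den : ℤ) = -q) := by
  rcases lt_or_gt_of_ne hq with h0 | h0
  · right
    have hc : Nat.Coprime (-p).natAbs (-q).natAbs := Int.isCoprime_iff_nat_coprime.1 h.neg_neg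
    have e : (p / q : ℚ) = ((-p : ℤ) : ℚ) / ((-q : ℤ) : ℚ) := by push_cast; rw [neg_div_neg_eq]
    rw [e]
    exact ⟨Rat.num_div_eq_of_coprime (by omega) hc, Rat.den_div_eq_of_coprime (by omega) hc⟩
  · left
    have hc := Int.isCoprime_iff_nat_coprime.1 h
    exact ⟨Rat.num_div_eq_of_coprime h0 hc, Rat.den_div_eq_of_coprime h0 hc⟩

lemma projPt_eq_coe {p q : ℤ} {α : ℚ} (h : (α : OnePoint ℚ) = projPt (p : ℚ) (q : ℚ)) :
    q ≠ 0 ∧ α = (p / q : ℚ) := by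
  unfold projPt at h
  split_ifs at h with h0
  · exact absurd h (OnePoint.coe_ne_infty α)
  · exact ⟨by exact_mod_cast h0, OnePoint.coe_injective h⟩

lemma fareyQ_coe_iff {α β : ℚ} : FareyQ (α : OnePoint ℚ) (β : OnePoint ℚ) ↔
    |β.num * α.den - α.num * β.den| = 1 := by
  constructor
  · rintro ⟨-, p, q, r, s, hα, hβ, hdet⟩
    obtain ⟨hq, hα⟩ := projPt_eq_coe hα
    obtain ⟨hs, hβ⟩ := projPt_eq_coe hβ
    have hc : IsCoprime p q ∧ IsCoprime r s := by
      rcases (abs_eq zero_le_one).1 hdet with h | h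
      · exact ⟨⟨s, -r, by linarith⟩, ⟨-q, p, by linarith⟩⟩
      · exact ⟨⟨-s, r, by linarith⟩, ⟨q, -p, by linarith⟩⟩
    have h1 := num_den_of_coprime hq hc.1
    have h2 := num_den_of_coprime hs hc.2
    rw [← hα] at h1
    rw [← hβ] at h2
    rw [← hdet]
    rcases h1 with ⟨h1, h1'⟩ | ⟨h1, h1'⟩ <;> rcases h2 with ⟨h2, h2'⟩ | ⟨h2, h2'⟩ <;>
      rw [h1, h1', h2, h2', abs_eq_abs]
    · right; ring
    · left; ring
    · left; ring
    · right; ring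
  · intro h
    refine ⟨?_, α.num, α.den, β.num, β.den, ?_, ?_, ?_⟩
    · intro e
      rw [OnePoint.coe_injective e] at h
      simp at h
    · simp [projPt, Rat.num_div_den]
    · simp [projPt, Rat.num_div_den]
    · rw [← h, abs_sub_comm, mul_comm (α.den : ℤ)]

lemma le_abs_sub_iff {ε : ℝ} {α β : ℚ} (h : β.num * α.den - α.num * β.den = 1) :
    ε ≤ |(β : ℝ) - α| ↔ ε * (α.den * β.den) ≤ 1 := by
  have h1 : (0 : ℝ) < α.den := by exact_mod_cast α.den_pos
  have h2 : (0 : ℝ) < β.den := by exact_mod_cast β.den_pos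
  have e : (β : ℝ) - α = 1 / (α.den * β.den) := by
    have := congrArg (fun z : ℚ => (z : ℝ)) (sub_eq_of_det h)
    push_cast at this
    exact this
  rw [e, abs_of_pos (by positivity), le_div_iff₀ (by positivity)]

lemma fareyCountQ_eq_ordered (ε : ℝ) : fareyCountQ ε = (orderedPairs ε).ncard := by
  have hinj : Set.InjOn (fun x : ℚ × ℚ => s(x.1, x.2)) (orderedPairs ε) := by
    rintro ⟨a, b⟩ ⟨-, -, h, -⟩ ⟨a', b'⟩ ⟨-, -, h', -⟩ e
    have h1 := lt_of_det h
    have h2 := lt_of_det h'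
    dsimp only at *
    rcases Sym2.eq_iff.1 e with ⟨rfl, rfl⟩ | ⟨rfl, rfl⟩
    · rfl
    · exact absurd h1 h2.asymm
  rw [← Set.InjOn.ncard_image hinj, fareyCountQ]
  congr 1
  ext S
  simp only [Set.mem_ofPred_eq, Set.mem_image, Prod.exists, orderedPairs]
  constructor
  · rintro ⟨α, β, rfl, hF, hα, hβ, hε⟩
    rcases (abs_eq zero_le_one).1 (fareyQ_coe_iff.1 hF) with h | h
    · exact ⟨α, β, ⟨hα.1, hβ.2, h, (le_abs_sub_iff h).1 hε⟩, rfl⟩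
    · have h' : α.num * β.den - β.num * α.den = 1 := by linarith
      rw [abs_sub_comm] at hε
      exact ⟨β, α, ⟨hβ.1, hα.2, h', (le_abs_sub_iff h').1 hε⟩, Sym2.eq_swap⟩
  · rintro ⟨α, β, ⟨h0, h1, h, hε⟩, rfl⟩
    have hlt := lt_of_det h
    exact ⟨α, β, rfl, fareyQ_coe_iff.2 (by rw [h]; rfl), ⟨h0, by linarith⟩, ⟨by linarith, h1⟩,
      (le_abs_sub_iff h).2 hε⟩

/-- The denominators determine the pair: `b.num` is the inverse of `a.den` modulo `b.den`, and it
lies in `[1, b.den]`. -/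
lemma injOn_den (ε : ℝ) :
    Set.InjOn (fun x : ℚ × ℚ => (x.1.den, x.2.den)) (orderedPairs ε) := by
  rintro ⟨a, b⟩ ⟨ha, hb, h, -⟩ ⟨a', b'⟩ ⟨ha', hb', h', -⟩ e
  dsimp only at *
  obtain ⟨e1, e2⟩ := Prod.mk.injEq .. ▸ e
  rw [← e1, ← e2] at h'
  have hq : (0 : ℤ) < a.den := by exact_mod_cast a.den_pos
  have hs : (0 : ℤ) < b.den := by exact_mod_cast b.den_pos
  have hbpos : 0 < b.num := by
    have := Rat.num_nonneg.2 ha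
    by_contra hc
    nlinarith
  have hbpos' : 0 < b'.num := by
    have := Rat.num_nonneg.2 ha'
    by_contra hc
    nlinarith
  have hble : b.num ≤ b.den := Rat.num_le_denom_iff.2 hb
  have hble' : b'.num ≤ b.den := by rw [e2]; exact Rat.num_le_denom_iff.2 hb'
  have hcop : IsCoprime (b.den : ℤ) (a.den : ℤ) := ⟨-a.num, b.num, by linarith⟩
  have hdvd : (b.den : ℤ) ∣ b.num - b'.num :=
    hcop.dvd_of_dvd_mul_left ⟨a.num - a'.num, by linear_combination h - h'⟩
  have hbb : b.num = b'.num := by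
    have := Int.eq_zero_of_abs_lt_dvd hdvd (by rw [abs_lt]; constructor <;> linarith)
    linarith
  have haa : a.num = a'.num := by
    rw [← hbb] at h'
    exact mul_right_cancel₀ hs.ne' (by linarith)
  rw [Prod.mk.injEq]
  exact ⟨Rat.ext haa e1, Rat.ext hbb e2⟩

/-- Every coprime pair of denominators occurs: reduce a Bézout coefficient of `q` to the range
`[1, s]`. -/
lemma exists_det {q s : ℕ} (hq : 1 ≤ q) (hs : 1 ≤ s) (h : q.Coprime s) :
    ∃ α β : ℚ, α.den = q ∧ β.den = s ∧ 0 ≤ α ∧ β ≤ 1 ∧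
      β.num * α.den - α.num * β.den = 1 := by
  obtain ⟨u, v, huv⟩ := Nat.isCoprime_iff_coprime.2 h
  have hs' : (0 : ℤ) < s := by exact_mod_cast hs
  have hq' : (0 : ℤ) < q := by exact_mod_cast hq
  obtain ⟨r, p, hr0, hrs, hdet⟩ : ∃ r p : ℤ, 0 < r ∧ r ≤ s ∧ r * q - p * s = 1 := by
    have h1 := Int.emod_nonneg (u - 1) hs'.ne'
    have h2 := Int.emod_lt_of_pos (u - 1) hs'
    have h3 := Int.emod_add_mul_ediv (u - 1) s
    refine ⟨(u - 1) % s + 1, -(v + q * ((u - 1) / s)), by linarith, by linarith, ?_⟩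
    linear_combination huv + q * h3
  have hp : 0 ≤ p := by
    by_contra hc
    nlinarith
  have c1 := Int.isCoprime_iff_nat_coprime.1 (show IsCoprime p q from ⟨-s, r, by linarith⟩)
  have c2 := Int.isCoprime_iff_nat_coprime.1 (show IsCoprime r s from ⟨q, -p, by linarith⟩)
  have n1 := Rat.num_div_eq_of_coprime hq' c1
  have d1 := Rat.den_div_eq_of_coprime hq' c1
  have n2 := Rat.num_div_eq_of_coprime hs' c2
  have d2 := Rat.den_div_eq_of_coprime hs' c2
  refine ⟨(p : ℚ) / ((q : ℤ) : ℚ), (r : ℚ) / ((s : ℤ) : ℚ), by exact_mod_cast d1,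
    by exact_mod_cast d2, ?_, ?_, ?_⟩
  · rw [← Rat.num_nonneg, n1]; exact hp
  · rw [← Rat.num_le_denom_iff, n2, d2]; exact hrs
  · rw [n1, d1, n2, d2]; exact hdet

/-- The Farey count is the number of coprime lattice points under the hyperbola
`a * b ≤ 1 / ε`. -/
lemma fareyCountQ_eq_card {ε : ℝ} (hε : 0 < ε) :
    fareyCountQ ε = ((hyp ⌊ε⁻¹⌋₊).filter fun p => p.1.Coprime p.2).card := by
  have hle (q s : ℕ) : ε * ((q : ℝ) * s) ≤ 1 ↔ q * s ≤ ⌊ε⁻¹⌋₊ := by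
    rw [Nat.le_floor_iff (by positivity), ← le_div_iff₀' hε, one_div]
    push_cast
    rfl
  rw [fareyCountQ_eq_ordered, ← Set.InjOn.ncard_image (injOn_den ε), ← Set.ncard_coe_finset]
  congr 1
  ext ⟨q, s⟩
  simp only [Set.mem_image, Finset.coe_filter, Set.mem_ofPred_eq, mem_hyp, Prod.exists,
    Prod.mk.injEq, orderedPairs]
  constructor
  · rintro ⟨α, β, ⟨-, -, h, hle'⟩, rfl, rfl⟩
    exact ⟨⟨α.den_pos, β.den_pos, (hle _ _).1 hle'⟩,
      Nat.isCoprime_iff_coprime.1 ⟨β.num, -α.num, by linarith⟩⟩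
  · rintro ⟨⟨hq, hs, hqs⟩, hc⟩
    obtain ⟨α, β, rfl, rfl, h0, h1, h⟩ := exists_det hq hs hc
    exact ⟨α, β, ⟨h0, h1, h, (hle _ _).2 hqs⟩, rfl, rfl⟩

/-! ### The asymptotics -/

/-- As `ε > 0` tends to `0`, the number of unordered pairs of rational Farey neighbours in
`[0,1]` at distance at least `ε` equals `(6/π²)·(−ln ε)/ε + O(ε⁻¹)`. -/
theorem farey_pair_count_asymptotics :
    (fun ε : ℝ => (fareyCountQ ε : ℝ) - 6 / π ^ 2 * (-Real.log ε) / ε)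
      =O[nhdsWithin 0 (Set.Ioi 0)] (fun ε => ε⁻¹) := by
  obtain ⟨K, hK⟩ := coprime_count_bound
  refine Asymptotics.IsBigO.of_bound K ?_
  filter_upwards [Ioc_mem_nhdsGT (zero_lt_one' ℝ)] with ε hε
  have h := hK ε⁻¹ ((one_le_inv₀ hε.1).2 hε.2)
  rw [← fareyCountQ_eq_card hε.1, Real.log_inv] at h
  rw [Real.norm_eq_abs, Real.norm_eq_abs, abs_of_pos (inv_pos.2 hε.1)]
  convert h using 3
  ring
end
end

section
/- Let K be ℚ or an imaginary quadratic number field, with ring of integers 𝒪_K. If x, y ∈ ℙ¹(K) are Farey neighbours, then for any x₀, x₁ ∈ 𝒪_K with (x₀, x₁) ≠ (0,0) and x = x₀/x₁ (convention a/0 = ∞) and any y₀, y₁ ∈ 𝒪_K with (y₀, y₁) ≠ (0,0) and y = y₀/y₁, the ideals x₀𝒪_K + x₁𝒪_K and y₀𝒪_K + y₁𝒪_K of 𝒪_K are principal. -/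
/-!
If `p * s - q * r` is a unit `u`, then dividing by `u` gives Bézout relations for both pairs
`(p, q)` and `(r, s)`. Any integral coordinates of the same projective point are proportional to
such a pair, hence an integral multiple `d • (p, q)` of it
(`isPrincipal_span_pair_of_proportional`), so the ideal they generate is `(d)`.
-/

noncomputable section
open scoped Classical
open NumberField

variable (K : Type*) [Field K] [NumberField K]

/-- Two elements of `ℙ¹(K) = K ∪ {∞}` are Farey neighbours if they are distinct and there
exist `p, q, r, s ∈ 𝒪_K` with `α = p/q`, `β = r/s` and `ps - qr ∈ 𝒪_K^×`. -/
def FareyNbr (α β : OnePoint K) : Prop :=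
  α ≠ β ∧ ∃ p q r s : 𝓞 K,
    α = projPt (p : K) (q : K) ∧ β = projPt (r : K) (s : K) ∧ IsUnit (p * s - q * r)

/-- Equal points of `ℙ¹(K)` have proportional coordinates. At infinity, where both
denominators vanish, the identity reads `0 = 0`. -/
theorem projPt_cross {F : Type*} [Field F] {a b c d : F} (h : projPt a b = projPt c d) :
    a * d = b * c := by
  unfold projPt at h
  split_ifs at h with hb hd hd
  · simp [hb, hd]
  · exact absurd h (OnePoint.infty_ne_coe _)
  · exact absurd h (OnePoint.coe_ne_infty _)
  · have h' := OnePoint.coe_injective h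
    rw [div_eq_div_iff hb hd] at h'
    rw [h', mul_comm]

/-- A pair proportional to a unimodular pair `(p, q)` is a multiple `d • (p, q)`, where
`d = a * x₀ + b * x₁` for Bézout coefficients `a, b` of `(p, q)`; hence it generates `(d)`. -/
theorem isPrincipal_span_pair_of_proportional {R : Type*} [CommRing R] {p q a b x₀ x₁ : R}
    (hab : a * p + b * q = 1) (hx : x₀ * q = x₁ * p) :
    (Ideal.span {x₀, x₁} : Ideal R).IsPrincipal := by
  refine ⟨⟨a * x₀ + b * x₁, le_antisymm ?_ ?_⟩⟩
  · refine Ideal.span_le.mpr ?_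
    rintro z (rfl | rfl)
    · exact Ideal.mem_span_singleton'.mpr
        ⟨p, by linear_combination z * hab - b * hx⟩
    · exact Ideal.mem_span_singleton'.mpr
        ⟨q, by linear_combination z * hab + a * hx⟩
  · refine (Ideal.span_singleton_le_iff_mem _).mpr ?_
    exact Ideal.mem_span_pair.mpr ⟨a, b, rfl⟩

/-- Let `K` be `ℚ` or an imaginary quadratic number field. If `x, y ∈ ℙ¹(K)` are Farey
neighbours, then for any representatives `x = x₀/x₁` and `y = y₀/y₁` with
`x₀, x₁, y₀, y₁ ∈ 𝒪_K`, the ideals `x₀𝒪_K + x₁𝒪_K` and `y₀𝒪_K + y₁𝒪_K` are principal. -/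
theorem fareyNbr_ideals_principal
    (hK : Module.finrank ℚ K = 1 ∨ (Module.finrank ℚ K = 2 ∧ IsEmpty (K →+* ℝ)))
    (x y : OnePoint K) (hxy : FareyNbr K x y)
    (x₀ x₁ : 𝓞 K) (hx0 : (x₀, x₁) ≠ (0, 0)) (hx : x = projPt (x₀ : K) (x₁ : K))
    (y₀ y₁ : 𝓞 K) (hy0 : (y₀, y₁) ≠ (0, 0)) (hy : y = projPt (y₀ : K) (y₁ : K)) :
    (Ideal.span {x₀, x₁} : Ideal (𝓞 K)).IsPrincipal ∧
      (Ideal.span {y₀, y₁} : Ideal (𝓞 K)).IsPrincipal := by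
  obtain ⟨-, p, q, r, s, hp, hr, hu⟩ := hxy
  obtain ⟨v, hv⟩ := hu.exists_right_inv
  have hx' : x₀ * q = x₁ * p := by
    have h := projPt_cross (hx.symm.trans hp)
    exact_mod_cast h
  have hy' : y₀ * s = y₁ * r := by
    have h := projPt_cross (hy.symm.trans hr)
    exact_mod_cast h
  exact ⟨isPrincipal_span_pair_of_proportional (a := s * v) (b := -(r * v))
      (by linear_combination hv) hx',
    isPrincipal_span_pair_of_proportional (a := -(q * v)) (b := p * v)
      (by linear_combination hv) hy'⟩
end
end

section
/- Let K be an imaginary quadratic number field. Every element x ∈ ℙ¹(K) = K ∪ {∞} has infinitely many K-Farey neighbours, i.e. the set {y ∈ ℙ¹(K) : y ≠ x and x, y are K-Farey neighbours} is infinite. -/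
/-!
Represent `x` by `(a, b)` and let `I = (a, b)`. As `𝓞 K` is Dedekind, `I * J = (n)` for some
ideal `J` and some `n ≠ 0`, so `n = a * d - b * c` with `c, d ∈ J`. Each of `a c, a d, b c, b d`
lies in `I * J = (n)`, hence `I * (c, d) = (n) = (a * d - b * c)`, and `c/d` is a neighbour of `x`.
For every `k : ℕ` the pair `(c + k n a, d + k n b)` has the same determinant against `(a, b)` and
the same divisibility, so it gives a neighbour as well. Two of these pairs have determinant
`(k - l) n² ≠ 0`, so the resulting points are pairwise distinct.
-/

noncomputable section
open scoped Classical
open NumberField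

variable (K : Type*) [Field K] [NumberField K]

/-- A pair `(a, b) ∈ 𝒪_K × 𝒪_K`, not both zero, represents `x ∈ ℙ¹(K) = K ∪ {∞}` if
`x = a/b` when `b ≠ 0` and `x = ∞` when `b = 0`. -/
def Represents (a b : 𝓞 K) (x : OnePoint K) : Prop :=
  (a, b) ≠ (0, 0) ∧ x = projPt (a : K) (b : K)

/-- Two distinct elements `x, y ∈ ℙ¹(K)` are `K`-Farey neighbours if there exist
representatives `(a, b)` of `x` and `(c, d)` of `y` with
`(a𝒪_K + b𝒪_K)(c𝒪_K + d𝒪_K) = (ad − bc)𝒪_K`. -/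
def KFareyNbr (x y : OnePoint K) : Prop :=
  x ≠ y ∧ ∃ a b c d : 𝓞 K, Represents K a b x ∧ Represents K c d y ∧
    Ideal.span {a, b} * Ideal.span {c, d} = Ideal.span {a * d - b * c}

theorem projPt_ne {F : Type*} [Field F] [NumberField F] {a b c d : 𝓞 F}
    (h : a * d - b * c ≠ 0) : projPt (a : F) (b : F) ≠ projPt (c : F) (d : F) := by
  intro he
  apply h
  have h1 := projPt_cross he
  rw [sub_eq_zero]
  apply RingOfIntegers.ext
  simpa using h1

theorem exists_represents {F : Type*} [Field F] [NumberField F] (x : OnePoint F) :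
    ∃ a b : 𝓞 F, Represents F a b x := by
  induction x using OnePoint.rec with
  | infty => exact ⟨1, 0, by simp, by simp [projPt]⟩
  | coe z =>
    obtain ⟨a, b, hb, rfl⟩ := IsFractionRing.div_surjective (A := 𝓞 F) z
    have hb0 : b ≠ 0 := nonZeroDivisors.ne_zero hb
    exact ⟨a, b, by simp [hb0], by simp [projPt, hb0]⟩

/-- In a Dedekind domain, any `(a, b) ≠ (0, 0)` has a companion pair `(c, d)` whose determinant
`n ≠ 0` against `(a, b)` divides all the products generating `(a, b) * (c, d)`. The pair is found
inside an ideal `J` with `(a, b) * J = (n)`. -/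
theorem exists_complement {R : Type*} [CommRing R] [IsDedekindDomain R] {a b : R}
    (h : (a, b) ≠ (0, 0)) : ∃ c d n : R, n ≠ 0 ∧ a * d - b * c = n ∧
      n ∣ a * c ∧ n ∣ a * d ∧ n ∣ b * c ∧ n ∣ b * d := by
  have ha : a ∈ Ideal.span {a, b} := Ideal.subset_span (by simp)
  have hb : b ∈ Ideal.span {a, b} := Ideal.subset_span (by simp)
  obtain ⟨n, hn, hnI⟩ : ∃ n : R, n ≠ 0 ∧ n ∈ Ideal.span {a, b} := by
    by_cases h0 : a = 0
    · exact ⟨b, fun h1 => h (by rw [h0, h1]), hb⟩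
    · exact ⟨a, h0, ha⟩
  obtain ⟨J, hJ⟩ : Ideal.span {a, b} ∣ Ideal.span {n} :=
    Ideal.dvd_span_singleton.2 hnI
  have hmem : n ∈ Ideal.span {a, b} * J := hJ ▸ Ideal.mem_span_singleton_self n
  rw [Ideal.span_insert, Ideal.sup_mul, Submodule.mem_sup] at hmem
  obtain ⟨y, hy, z, hz, hyz⟩ := hmem
  obtain ⟨d, hd, rfl⟩ := Ideal.mem_span_singleton_mul.1 hy
  obtain ⟨t, ht, rfl⟩ := Ideal.mem_span_singleton_mul.1 hz
  have key : ∀ u ∈ Ideal.span {a, b}, ∀ v ∈ J, n ∣ u * v := fun u hu v hv => by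
    rw [← Ideal.mem_span_singleton, hJ]
    exact Ideal.mul_mem_mul hu hv
  have hc : -t ∈ J := J.neg_mem ht
  exact ⟨-t, d, n, hn, by rw [← hyz]; ring, key _ ha _ hc, key _ ha _ hd, key _ hb _ hc,
    key _ hb _ hd⟩

theorem span_pair_mul_eq {R : Type*} [CommRing R] {a b c d n : R} (hn : a * d - b * c = n)
    (h1 : n ∣ a * c) (h2 : n ∣ a * d) (h3 : n ∣ b * c) (h4 : n ∣ b * d) :
    Ideal.span {a, b} * Ideal.span {c, d} = Ideal.span {a * d - b * c} := by
  rw [hn]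
  apply le_antisymm
  · rw [Ideal.span_pair_mul_span_pair, Ideal.span_le]
    rintro x (rfl | rfl | rfl | rfl) <;> simpa [Ideal.mem_span_singleton]
  · rw [Ideal.span_singleton_le_iff_mem, ← hn]
    exact sub_mem (Ideal.mul_mem_mul (Ideal.subset_span (by simp)) (Ideal.subset_span (by simp)))
      (Ideal.mul_mem_mul (Ideal.subset_span (by simp)) (Ideal.subset_span (by simp)))

/-- Let `K` be an imaginary quadratic number field. Every element of `ℙ¹(K) = K ∪ {∞}` has
infinitely many `K`-Farey neighbours. -/
theorem infinite_KFarey_neighbours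
    (h2 : Module.finrank ℚ K = 2) (hr : IsEmpty (K →+* ℝ)) (x : OnePoint K) :
    {y : OnePoint K | KFareyNbr K x y}.Infinite := by
  obtain ⟨a, b, hab, rfl⟩ := exists_represents x
  obtain ⟨c, d, n, hn, hdet, h1, h2', h3, h4⟩ := exists_complement hab
  let f : ℕ → OnePoint K := fun k =>
    projPt ((c + k * n * a : 𝓞 K) : K) ((d + k * n * b : 𝓞 K) : K)
  have hdetk : ∀ k : ℕ, a * (d + k * n * b) - b * (c + k * n * a) = n := fun k => by
    rw [← hdet]; ring
  have hf : Function.Injective f := by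
    intro k l hkl
    by_contra hne
    refine projPt_ne ?_ hkl
    have : (c + k * n * a) * (d + l * n * b) - (d + k * n * b) * (c + l * n * a)
        = ((k : 𝓞 K) - l) * n * (a * d - b * c) := by ring
    rw [this, hdet]
    have hkl' : (k : 𝓞 K) - l ≠ 0 := sub_ne_zero.2 (Nat.cast_injective.ne hne)
    exact mul_ne_zero (mul_ne_zero hkl' hn) hn
  -- Adding a multiple of `n` preserves divisibility by `n`.
  have hdvd : ∀ (k : ℕ) (u v w : 𝓞 K), n ∣ u * v → n ∣ u * (v + k * n * w) := fun k u v w h => by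
    rw [mul_add]
    exact dvd_add h ⟨u * k * w, by ring⟩
  refine Set.infinite_of_injective_forall_mem hf fun k => ?_
  refine ⟨projPt_ne (by rw [hdetk k]; exact hn), a, b, _, _, ⟨hab, rfl⟩, ⟨?_, rfl⟩,
    span_pair_mul_eq (hdetk k) (hdvd k _ _ _ h1) (hdvd k _ _ _ h2') (hdvd k _ _ _ h3)
      (hdvd k _ _ _ h4)⟩
  intro h0
  rw [Prod.mk.injEq] at h0
  apply hn
  rw [← hdetk k, h0.1, h0.2]
  ring
end
end

section
/- Let K be an imaginary quadratic number field. If x, y ∈ ℙ¹(K) are K-Farey neighbours, then for ANY representatives (a, b) of x and (c, d) of y, the ideal (a𝒪_K + b𝒪_K)(c𝒪_K + d𝒪_K) of 𝒪_K is principal; in other words, the ideal classes [a𝒪_K + b𝒪_K] and [c𝒪_K + d𝒪_K] in the class group of K are inverse to one another. -/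
/-!
Any two representatives of a point of `ℙ¹(K)` differ by a scalar in `Kˣ`, so the ideals they
generate differ by nonzero principal factors (`Represents.exists_span_mul_eq`). Hence the
product ideal for arbitrary representatives of two neighbours agrees, up to nonzero principal
factors, with the product for the representatives witnessing the neighbour relation, which
is principal by definition. Cancelling the principal factor
(`isPrincipal_of_span_singleton_mul_eq`) gives the claim.
-/

noncomputable section
open scoped Classical
open NumberField

variable (K : Type*) [Field K] [NumberField K]

/-- Two representatives of the same point of `ℙ¹(K)` are proportional, so the ideals they
generate agree up to nonzero principal factors, i.e. lie in the same ideal class. -/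
lemma Represents.exists_span_mul_eq {a b a' b' : 𝓞 K} {x : OnePoint K}
    (h : Represents K a b x) (h' : Represents K a' b' x) :
    ∃ s t : 𝓞 K, s ≠ 0 ∧ t ≠ 0 ∧
      Ideal.span {s} * Ideal.span {a, b} = Ideal.span {t} * Ideal.span {a', b'} := by
  suffices H : ∃ s t : 𝓞 K, s ≠ 0 ∧ t ≠ 0 ∧ s * a = t * a' ∧ s * b = t * b' by
    obtain ⟨s, t, hs, ht, h1, h2⟩ := H
    refine ⟨s, t, hs, ht, ?_⟩
    rw [Ideal.span_mul_span', Ideal.span_mul_span', Set.singleton_mul, Set.singleton_mul,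
      Set.image_pair, Set.image_pair, h1, h2]
  obtain ⟨hne, rfl⟩ := h
  obtain ⟨hne', hx⟩ := h'
  unfold projPt at hx
  by_cases hb : b = 0 <;> by_cases hb' : b' = 0
  · subst hb hb'
    refine ⟨a', a, ?_, ?_, mul_comm _ _, by simp⟩
    · rintro rfl; exact hne' rfl
    · rintro rfl; exact hne rfl
  · simp [hb, hb'] at hx
  · simp [hb, hb'] at hx
  · refine ⟨b', b, hb', hb, ?_, mul_comm _ _⟩
    have hbK : (b : K) ≠ 0 := by simpa using hb
    have hbK' : (b' : K) ≠ 0 := by simpa using hb'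
    rw [if_neg hbK, if_neg hbK', OnePoint.coe_eq_coe, div_eq_div_iff hbK hbK'] at hx
    apply RingOfIntegers.coe_injective
    push_cast
    linear_combination hx

/-- In a domain, an ideal that becomes principal after multiplication by a nonzero principal
ideal is itself principal. -/
lemma isPrincipal_of_span_singleton_mul_eq {R : Type*} [CommRing R] [IsDomain R]
    {I : Ideal R} {r e : R} (hr : r ≠ 0) (h : Ideal.span {r} * I = Ideal.span {e}) :
    I.IsPrincipal := by
  obtain ⟨z, -, rfl⟩ := Ideal.mem_span_singleton_mul.mp
    (h ▸ Ideal.mem_span_singleton_self e : e ∈ Ideal.span {r} * I)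
  refine ⟨z, ?_⟩
  rw [← Ideal.span_singleton_mul_span_singleton] at h
  exact (Ideal.span_singleton_mul_right_inj hr).mp h

/-- Let `K` be an imaginary quadratic number field. If `x, y ∈ ℙ¹(K)` are `K`-Farey
neighbours, then for ANY representatives `(a, b)` of `x` and `(c, d)` of `y`, the ideal
`(a𝒪_K + b𝒪_K)(c𝒪_K + d𝒪_K)` is principal; in other words, the ideal classes
`[a𝒪_K + b𝒪_K]` and `[c𝒪_K + d𝒪_K]` are inverse to one another in the class group. -/
theorem KFareyNbr_product_principal
    (h2 : Module.finrank ℚ K = 2) (hr : IsEmpty (K →+* ℝ))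
    (x y : OnePoint K) (hxy : KFareyNbr K x y)
    (a b c d : 𝓞 K) (hab : Represents K a b x) (hcd : Represents K c d y) :
    ((Ideal.span {a, b} * Ideal.span {c, d} : Ideal (𝓞 K))).IsPrincipal := by
  obtain ⟨-, a', b', c', d', hab', hcd', hI⟩ := hxy
  obtain ⟨s, t, hs, -, h1⟩ := hab.exists_span_mul_eq K hab'
  obtain ⟨u, v, hu, -, h3⟩ := hcd.exists_span_mul_eq K hcd'
  apply isPrincipal_of_span_singleton_mul_eq (r := s * u)
    (e := t * v * (a' * d' - b' * c')) (mul_ne_zero hs hu)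
  rw [← Ideal.span_singleton_mul_span_singleton, mul_mul_mul_comm, h1, h3, mul_mul_mul_comm,
    hI, Ideal.span_singleton_mul_span_singleton, Ideal.span_singleton_mul_span_singleton]
end
end

section
/- Let K be an imaginary quadratic number field. If x, y ∈ K are K-Farey neighbours, then N(𝒪_K + x𝒪_K) · N(𝒪_K + y𝒪_K) = N_{K/ℚ}(x − y), where 𝒪_K + x𝒪_K and 𝒪_K + y𝒪_K are fractional ideals of K, N denotes the absolute norm of fractional ideals (extended multiplicatively from the absolute ideal norm), and N_{K/ℚ}(x − y) is the (positive rational) field norm of x − y. -/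
/-!
If `x = a/b` and `y = c/d` with `b, d ≠ 0`, then `b(𝒪_K + x𝒪_K) = a𝒪_K + b𝒪_K`, and similarly for
`y`, so multiplying `(𝒪_K + x𝒪_K)(𝒪_K + y𝒪_K)` by `bd` turns the Farey condition into
`(𝒪_K + x𝒪_K)(𝒪_K + y𝒪_K) = (x - y)𝒪_K` (`one_add_span_mul_one_add_span`). Taking absolute norms
gives `|N_{K/ℚ}(x - y)|`. The sign is right because an imaginary quadratic field has exactly two
complex embeddings, which are conjugate to each other, so that
`N_{K/ℚ}(z) = φ(z) * conj (φ(z)) ≥ 0` (`norm_nonneg_of_imaginary_quadratic`).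
-/

noncomputable section
open scoped Classical
open NumberField

variable (K : Type*) [Field K] [NumberField K]

open FractionalIdeal in
/-- Clearing the denominator `b` of `a/b` turns `𝒪_K + (a/b)𝒪_K` into the integral ideal
`a𝒪_K + b𝒪_K`. -/
lemma spanSingleton_mul_one_add (a b : 𝓞 K) (hb : (b : K) ≠ 0) :
    spanSingleton (nonZeroDivisors (𝓞 K)) (b : K) *
      (1 + spanSingleton (nonZeroDivisors (𝓞 K)) ((a : K) / b)) =
    ((Ideal.span {a, b} : Ideal (𝓞 K)) : FractionalIdeal (nonZeroDivisors (𝓞 K)) K) := by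
  rw [mul_add, mul_one, spanSingleton_mul_spanSingleton, mul_div_cancel₀ _ hb,
    Ideal.span_insert, coeIdeal_sup, coeIdeal_span_singleton,
    coeIdeal_span_singleton, add_comm]

/-- A finite point of the projective line is represented only by pairs with nonzero second
entry. -/
lemma Represents.eq_div {a b : 𝓞 K} {x : K} (h : Represents K a b (x : OnePoint K)) :
    (b : K) ≠ 0 ∧ x = (a : K) / b := by
  obtain ⟨-, h⟩ := h
  unfold projPt at h
  split_ifs at h with hb
  · exact absurd h (OnePoint.coe_ne_infty x)
  · exact ⟨hb, OnePoint.coe_injective h⟩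

open FractionalIdeal in
lemma one_add_span_mul_one_add_span (x y : K)
    (hxy : KFareyNbr K (x : OnePoint K) (y : OnePoint K)) :
    (1 + spanSingleton (nonZeroDivisors (𝓞 K)) x) *
      (1 + spanSingleton (nonZeroDivisors (𝓞 K)) y) =
    spanSingleton (nonZeroDivisors (𝓞 K)) (x - y) := by
  obtain ⟨-, a, b, c, d, hx, hy, h⟩ := hxy
  obtain ⟨hb, rfl⟩ := hx.eq_div
  obtain ⟨hd, rfl⟩ := hy.eq_div
  have hbd : spanSingleton (nonZeroDivisors (𝓞 K)) ((b : K) * d) ≠ 0 :=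
    spanSingleton_ne_zero_iff.mpr (mul_ne_zero hb hd)
  apply mul_left_cancel₀ hbd
  rw [← spanSingleton_mul_spanSingleton, mul_mul_mul_comm, spanSingleton_mul_one_add K a b hb,
    spanSingleton_mul_one_add K c d hd, ← coeIdeal_mul, h, coeIdeal_span_singleton,
    spanSingleton_mul_spanSingleton, spanSingleton_mul_spanSingleton]
  congr 1
  push_cast
  field_simp

open ComplexEmbedding in
lemma norm_nonneg_of_imaginary_quadratic (h2 : Module.finrank ℚ K = 2)
    (hr : IsEmpty (K →+* ℝ)) (z : K) : 0 ≤ Algebra.norm ℚ z := by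
  obtain ⟨φ⟩ : Nonempty (K →+* ℂ) := inferInstance
  have hφ : φ ≠ conjugate φ := fun h =>
    hr.elim (IsReal.embedding (φ := φ) (isReal_iff.mpr h.symm))
  -- The degree is `2`, so `φ` and its conjugate are all the embeddings.
  have huniv : (Finset.univ : Finset (K →+* ℂ)) = {φ, conjugate φ} := by
    symm
    apply Finset.eq_univ_of_card
    rw [Finset.card_pair hφ, Embeddings.card, h2]
  have hprod : ((Algebra.norm ℚ z : ℚ) : ℂ) = ((Complex.normSq (φ z) : ℝ) : ℂ) := by
    have h := Algebra.norm_eq_prod_embeddings ℚ ℂ z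
    rw [eq_ratCast] at h
    rw [h, ← Complex.mul_conj,
      Fintype.prod_equiv (RingHom.equivRatAlgHom K ℂ).symm
        (fun σ : K →ₐ[ℚ] ℂ => σ z) (fun σ : K →+* ℂ => σ z) (fun _ => rfl),
      huniv, Finset.prod_pair hφ, conjugate_coe_eq]
  have hreal : ((Algebra.norm ℚ z : ℚ) : ℝ) = Complex.normSq (φ z) := by exact_mod_cast hprod
  have : (0 : ℝ) ≤ ((Algebra.norm ℚ z : ℚ) : ℝ) := hreal ▸ Complex.normSq_nonneg _
  exact_mod_cast this

/-- Let `K` be an imaginary quadratic number field. If `x, y ∈ K` are `K`-Farey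
neighbours, then `N(𝒪_K + x𝒪_K) · N(𝒪_K + y𝒪_K) = N_{K/ℚ}(x − y)`, where `N` is the
absolute norm of fractional ideals and `N_{K/ℚ}` the field norm. -/
theorem KFareyNbr_fractional_norm_eq
    (h2 : Module.finrank ℚ K = 2) (hr : IsEmpty (K →+* ℝ))
    (x y : K) (hxy : KFareyNbr K (x : OnePoint K) (y : OnePoint K)) :
    FractionalIdeal.absNorm
        ((1 : FractionalIdeal (nonZeroDivisors (𝓞 K)) K) +
          FractionalIdeal.spanSingleton (nonZeroDivisors (𝓞 K)) x) *
      FractionalIdeal.absNorm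
        ((1 : FractionalIdeal (nonZeroDivisors (𝓞 K)) K) +
          FractionalIdeal.spanSingleton (nonZeroDivisors (𝓞 K)) y) =
      Algebra.norm ℚ (x - y) := by
  rw [← map_mul, one_add_span_mul_one_add_span K x y hxy,
    FractionalIdeal.absNorm_span_singleton,
    abs_of_nonneg (norm_nonneg_of_imaginary_quadratic K h2 hr _)]
end
end

section
/- Let f be a squarefree negative integer with −f ≥ 6 such that −f is not a prime number, let K = ℚ(√f) with ring of integers 𝒪_K, and let p₀ be a prime number dividing −f. Then there is no element x ∈ 𝒪_K whose field norm N_{K/ℚ}(x) equals p₀. -/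
/-!
Writing `x = u + v√f` with `u v : ℚ`, the trace of `x` is `T = 2u` and its norm is `u² - f v²`.
If `x` is integral of norm `p₀`, then `T` is an integer and `T² - f b² = 4 p₀` with `b = 2v`
(`exists_trace_norm_form`); since `f` is squarefree and `f b²` is an integer, `b` is an integer too
(`exists_int_of_squarefree_mul_sq`).

Put `-f = p₀ m`. Then `p₀` divides `T²`, hence `T = p₀ c`, and `p₀ c² + m b² = 4`. If `b = 0`
or `c = 0`, this is impossible because `p₀` is prime and `m` is squarefree and different from `1`
(as `-f` is not prime). Otherwise `p₀ + m ≤ 4`, which contradicts `p₀ m ≥ 6`, `p₀, m ≥ 2`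
(`no_int_solution`). The argument works with `T` and `b` directly, so the residue of `f` modulo
`4` plays no role.
-/

noncomputable section
open NumberField

/-- The Diophantine core: the norm equation, multiplied by `4`, has no integer solution. -/
lemma no_int_solution (f : ℤ) (hsf : Squarefree f) (h6 : 6 ≤ -f) (hnp : ¬ Prime (-f))
    (p : ℕ) (hp : p.Prime) (hdvd : (p : ℤ) ∣ -f) (T b : ℤ) (h : T ^ 2 - f * b ^ 2 = 4 * p) :
    False := by
  obtain ⟨m, hm⟩ := hdvd
  have hpp : Prime (p : ℤ) := Nat.prime_iff_prime_int.mp hp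
  have hp2 : (2 : ℤ) ≤ p := by exact_mod_cast hp.two_le
  have hm1 : m ≠ 1 := by
    rintro rfl
    rw [mul_one] at hm
    exact hnp (hm ▸ hpp)
  have hm2 : 2 ≤ m := by
    have : 0 < m := by
      by_contra hcon
      nlinarith
    omega
  have hmsf : Squarefree m := by
    refine hsf.squarefree_of_dvd ⟨-p, ?_⟩
    linarith
  obtain ⟨c, rfl⟩ : (p : ℤ) ∣ T := by
    refine hpp.dvd_of_dvd_pow (n := 2) ⟨4 - m * b ^ 2, ?_⟩
    linear_combination h - b ^ 2 * hm
  have key : p * c ^ 2 + m * b ^ 2 = 4 := by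
    have hp0 : (p : ℤ) ≠ 0 := hpp.ne_zero
    apply mul_left_cancel₀ hp0
    linear_combination h - b ^ 2 * hm
  -- A squarefree integer `n ≥ 2` is never `4` divided by a square.
  have aux : ∀ n d : ℤ, 2 ≤ n → Squarefree n → n * d ^ 2 ≠ 4 := by
    intro n d hn hs hnd
    have hd : d ≠ 0 := by rintro rfl; simp at hnd
    have hd1 : 1 ≤ d ^ 2 := Int.add_one_le_iff.mpr (sq_pos_iff.mpr hd)
    have hd2 : d ^ 2 ≤ 2 := by nlinarith
    have hd3 : d ^ 2 = 1 := by
      have : -1 ≤ d := by nlinarith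
      have : d ≤ 1 := by nlinarith
      interval_cases d <;> simp_all
    have hn4 : n = 4 := by rw [hd3] at hnd; linarith
    subst hn4
    have := hs 2 ⟨1, by norm_num⟩
    rw [Int.isUnit_iff] at this
    omega
  rcases eq_or_ne b 0 with rfl | hb
  · exact aux p c hp2 hpp.squarefree (by simpa using key)
  rcases eq_or_ne c 0 with rfl | hc
  · exact aux m b hm2 hmsf (by simpa using key)
  have hb1 : 1 ≤ b ^ 2 := Int.add_one_le_iff.mpr (sq_pos_iff.mpr hb)
  have hc1 : 1 ≤ c ^ 2 := Int.add_one_le_iff.mpr (sq_pos_iff.mpr hc)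
  have hle : p + m ≤ 4 := by nlinarith
  nlinarith

/-- If `f` is squarefree, a prime in the denominator of `b` would survive in that of `f b²`. -/
lemma exists_int_of_squarefree_mul_sq (f : ℤ) (hsf : Squarefree f) (b : ℚ) (n : ℤ)
    (h : (f : ℚ) * b ^ 2 = n) : ∃ k : ℤ, b = k := by
  have h1 : f * b.num ^ 2 = n * (b.den : ℤ) ^ 2 := by
    have hb : b * b.den = b.num := Rat.mul_den_eq_num b
    have : (f : ℚ) * b.num ^ 2 = n * (b.den : ℚ) ^ 2 := by
      rw [← hb, ← h]; ring
    exact_mod_cast this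
  have hcop : IsCoprime ((b.den : ℤ) ^ 2) (b.num ^ 2) := by
    apply IsCoprime.pow
    rw [Int.isCoprime_iff_gcd_eq_one]
    exact b.reduced.symm
  have hdvd : (b.den : ℤ) ^ 2 ∣ f := hcop.dvd_of_dvd_mul_right ⟨n, by rw [h1]; ring⟩
  have hu := hsf (b.den : ℤ) (by rwa [← sq])
  have hd1 : b.den = 1 := by
    rw [Int.isUnit_iff] at hu
    omega
  exact ⟨b.num, (Rat.coe_int_num_of_den_eq_one hd1).symm⟩

/-- In `K = ℚ(√f)`, every element satisfies `Tr(x)² - f b² = 4 N(x)` for some rational `b`,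
namely twice its coordinate along `√f`. -/
lemma exists_trace_norm_form (f : ℤ) (hneg : f < 0) (K : Type*) [Field K] [NumberField K]
    (h2 : Module.finrank ℚ K = 2) (s : K) (hs : s ^ 2 = (f : K)) (x : K) :
    ∃ b : ℚ, Algebra.trace ℚ K x ^ 2 - f * b ^ 2 = 4 * Algebra.norm ℚ x := by
  have hli : LinearIndependent ℚ ![(1 : K), s] := by
    rw [LinearIndependent.pair_iff]
    intro a t hat
    rw [Algebra.smul_def, Algebra.smul_def, mul_one] at hat
    -- Squaring `a = -t√f` gives `a² = f t²`, whose sides have opposite signs.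
    have hsq : a ^ 2 = f * t ^ 2 := by
      apply (algebraMap ℚ K).injective
      simp only [map_mul, map_pow, map_intCast]
      linear_combination (algebraMap ℚ K a - algebraMap ℚ K t * s) * hat
        + (algebraMap ℚ K t) ^ 2 * hs
    have hf : (f : ℚ) < 0 := by exact_mod_cast hneg
    have ht : t = 0 := by
      by_contra hne
      have : 0 < t ^ 2 := by positivity
      nlinarith [sq_nonneg a]
    subst ht
    exact ⟨by simpa using hsq, rfl⟩
  let B := basisOfLinearIndependentOfCardEqFinrank hli (by simp [h2])
  have hB0 : B 0 = 1 := by simp [B]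
  have hB1 : B 1 = s := by simp [B]
  set u := B.repr x 0
  set v := B.repr x 1
  have hx : x = u • B 0 + v • B 1 := by
    rw [← Fin.sum_univ_two (fun i => B.repr x i • B i), B.sum_repr]
  have hx0 : x * B 0 = u • B 0 + v • B 1 := by rw [← hx, hB0, mul_one]
  have hx1 : x * B 1 = (v * f) • B 0 + u • B 1 := by
    rw [hx, hB0, hB1]
    simp only [Algebra.smul_def, map_mul, map_intCast]
    linear_combination (algebraMap ℚ K v) * hs
  have hM : Algebra.leftMulMatrix B x = !![u, v * f; v, u] := by
    ext i j
    rw [Algebra.leftMulMatrix_eq_repr_mul]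
    fin_cases i <;> fin_cases j <;>
      simp [hx0, hx1]
  refine ⟨2 * v, ?_⟩
  rw [Algebra.trace_eq_matrix_trace B, Algebra.norm_eq_matrix_det B, hM, Matrix.trace_fin_two_of,
    Matrix.det_fin_two_of]
  ring

/-- Let `f` be a squarefree negative integer with `−f ≥ 6` such that `−f` is not prime,
let `K = ℚ(√f)`, and let `p₀` be a prime number dividing `−f`. Then there is no element
of `𝒪_K` of field norm `p₀`. -/
theorem no_element_of_norm_ramified_prime
    (f : ℤ) (hsf : Squarefree f) (hneg : f < 0) (h6 : 6 ≤ -f) (hnp : ¬ Prime (-f))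
    (p₀ : ℕ) (hp : p₀.Prime) (hdvd : (p₀ : ℤ) ∣ -f)
    (K : Type*) [Field K] [NumberField K] (h2 : Module.finrank ℚ K = 2)
    (sqf : K) (hsq : sqf ^ 2 = (f : K)) :
    ¬ ∃ x : 𝓞 K, Algebra.norm ℚ (x : K) = (p₀ : ℚ) := by
  rintro ⟨x, hx⟩
  obtain ⟨b, hb⟩ := exists_trace_norm_form f hneg K h2 sqf hsq (x : K)
  have hT : IsIntegral ℤ (Algebra.trace ℚ K (x : K)) :=
    Algebra.isIntegral_trace (RingOfIntegers.isIntegral_coe x)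
  obtain ⟨T, hT⟩ := IsIntegrallyClosed.isIntegral_iff.mp hT
  rw [← hT, hx, eq_intCast] at hb
  obtain ⟨k, rfl⟩ := exists_int_of_squarefree_mul_sq f hsf b (T ^ 2 - 4 * p₀) (by
    push_cast
    linarith)
  exact no_int_solution f hsf h6 hnp p₀ hp hdvd T k (by exact_mod_cast hb)
end
end

section
/- As δ > 0 tends to 0, the number of points z in the orbit of i under the Möbius (homography) action of SL₂(ℤ) on the complex upper half-plane that satisfy 0 ≤ Re z < 1 and Im z ≥ δ equals (3/(2π))·δ⁻¹ + O(δ^{−1/2}). -/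
/-!
A point `g • i` of the orbit has imaginary part `1 / (c ^ 2 + d ^ 2)`, where `(c, d)` is the bottom
row of `g`. The bottom row determines the point up to integer translation, and the stabilizer
`{±1, ±S}` of `i` rotates the bottom row by right angles. So the points of the orbit in the strip
with `Im z ≥ δ` correspond to the coprime pairs with `c ≥ 1`, `d ≥ 0`, `c ^ 2 + d ^ 2 ≤ 1 / δ`
(`orbitICount_eq`).

With `N = ⌊1 / δ⌋`, Möbius inversion over the gcd (`card_primPts`) writes their number as
`∑ μ(k) R(N / k ^ 2)`, where `R` counts all lattice points of the quarter disc. The main term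
`(π / 4) N ∑ μ(k) / k ^ 2` gives `(3 / (2 π)) N`, as `∑ μ(k) / k ^ 2 = 6 / π ^ 2`. The trivial bound
`R(x) = π x / 4 + O(√x)` would leave an error `√N log N`, so some power saving in the Gauss circle
problem is needed; `abs_card_quadrantPts_sub_le` proves the error `O(x ^ (4 / 9))` by elementary
means:

* The count is a sum of floors of `f(n) = √(x - n ^ 2)` for `n ≤ √(x / 2)`, and the corresponding
  sum of `f(n)` is compared with the area by the trapezoid rule (`abs_main_term_le`).
* Near `n`, Dirichlet's theorem approximates the slope of `f` by a rational `a / q`. Over a block of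
  length `q` the values of `f` are close to an arithmetic progression of slope `a / q`, whose
  numerators run through all residues modulo `q`; hence the fractional parts average `1 / 2` with
  total error `O(1)` per block (`abs_sum_block_le`).
* Small denominators `q` are inefficient, but occur for few `n` since the slope is strictly monotone
  (`card_badIndices_le`). Cutting the range greedily into blocks (`abs_sum_greedy_le`) and
  optimizing the range of denominators gives the exponent `4 / 9`.
-/


noncomputable section
open Filter Real UpperHalfPlane

/-- The number of points `z` in the `SL₂(ℤ)`-orbit of `i` in the upper half-plane with
`0 ≤ Re z < 1` and `Im z ≥ δ`. -/
def orbitICount (δ : ℝ) : ℕ :=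
  Set.ncard {z : UpperHalfPlane |
    z ∈ MulAction.orbit (Matrix.SpecialLinearGroup (Fin 2) ℤ) UpperHalfPlane.I ∧
    0 ≤ z.re ∧ z.re < 1 ∧ δ ≤ z.im}

/-! ### Floors along arithmetic progressions -/

lemma sum_range_natCast_real (q : ℕ) :
    (∑ t ∈ Finset.range q, (t : ℝ)) = q * (q - 1) / 2 := by
  induction q with
  | zero => simp
  | succ k ih => rw [Finset.sum_range_succ, ih]; push_cast; ring

lemma sum_emod_of_coprime (q : ℕ) (hq : 0 < q) (a b : ℤ) (h : IsCoprime a (q : ℤ)) :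
    ∑ t ∈ Finset.range q, (b + a * t) % (q : ℤ) = ∑ t ∈ Finset.range q, (t : ℤ) := by
  have hq' : (0 : ℤ) < q := by exact_mod_cast hq
  have hcast : ∀ t : ℕ, (((b + a * t) % (q : ℤ)).toNat : ℤ) = (b + a * t) % (q : ℤ) :=
    fun t => Int.toNat_of_nonneg (Int.emod_nonneg _ hq'.ne')
  have hinj : Set.InjOn (fun t : ℕ => ((b + a * t) % (q : ℤ)).toNat) (Finset.range q) := by
    intro s hs t ht hst
    simp only [Finset.coe_range, Set.mem_Iio] at hs ht
    have h1 : (b + a * s) % (q : ℤ) = (b + a * t) % (q : ℤ) := by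
      simpa only [hcast] using congrArg (Nat.cast : ℕ → ℤ) hst
    have h2 : (q : ℤ) ∣ a * (s - t) := by
      have := Int.ModEq.dvd (show (b + a * t) ≡ (b + a * s) [ZMOD q] from h1.symm)
      convert this using 1; ring
    have h3 : (q : ℤ) ∣ (s - t : ℤ) := h.symm.dvd_of_dvd_mul_left h2
    have h4 : (s - t : ℤ) = 0 := by
      apply Int.eq_zero_of_abs_lt_dvd h3
      rw [abs_lt]; omega
    omega
  have himg : (Finset.range q).image (fun t : ℕ => ((b + a * t) % (q : ℤ)).toNat)
      = Finset.range q := by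
    apply Finset.eq_of_subset_of_card_le
    · intro y hy
      obtain ⟨t, -, rfl⟩ := Finset.mem_image.1 hy
      have h1 := hcast t
      have h2 := Int.emod_lt_of_pos (b + a * t) hq'
      simp only [Finset.mem_range]; omega
    · rw [Finset.card_image_of_injOn hinj]
  conv_rhs => rw [← himg, Finset.sum_image hinj]
  exact Finset.sum_congr rfl fun t _ => (hcast t).symm

/-- The floors of a full period of an arithmetic progression of slope `a / q` can be summed
exactly, since the numerators run through every residue class modulo `q` once. -/
lemma sum_floor_linear (q : ℕ) (hq : 0 < q) (a : ℤ) (h : IsCoprime a (q : ℤ)) (β : ℝ) :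
    ∑ t ∈ Finset.range q, (⌊β + a * t / q⌋ : ℝ) = ⌊q * β⌋ + (a - 1) * (q - 1) / 2 := by
  have hq' : (0 : ℝ) < q := by exact_mod_cast hq
  have h1 : ∀ t : ℕ, (⌊β + a * t / q⌋ : ℝ)
      = ((⌊q * β⌋ + a * t : ℤ) - ((⌊q * β⌋ + a * t) % (q : ℤ) : ℤ)) / q := by
    intro t
    have h2 : ⌊β + a * t / q⌋ = (⌊q * β⌋ + a * t) / (q : ℤ) := by
      rw [← Int.natCast_mul_floor_div_cancel hq.ne']
      congr 1
      have : (q : ℝ) * (β + a * t / q) = q * β + ((a * t : ℤ) : ℝ) := by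
        push_cast; field_simp
      rw [this, Int.floor_add_intCast]
    rw [h2, eq_div_iff hq'.ne']
    have := Int.ediv_mul_add_emod (⌊q * β⌋ + a * t) (q : ℤ)
    have h3 : ((⌊q * β⌋ + a * t) / (q : ℤ)) * (q : ℤ)
      = (⌊q * β⌋ + a * t) - ((⌊q * β⌋ + a * t) % (q : ℤ)) := by linarith
    exact_mod_cast h3
  rw [Finset.sum_congr rfl fun t _ => h1 t, ← Finset.sum_div, Finset.sum_sub_distrib,
    ← Int.cast_sum (f := fun t : ℕ => (⌊q * β⌋ + a * t) % (q : ℤ)),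
    sum_emod_of_coprime q hq a _ h]
  push_cast
  rw [Finset.sum_add_distrib, ← Finset.mul_sum, sum_range_natCast_real]
  simp only [Finset.sum_const, Finset.card_range, nsmul_eq_mul]
  field_simp
  ring

/-- A sequence within `D / q` of an arithmetic progression of slope `a / q` has, over a full
period, fractional parts averaging `1 / 2` up to a bounded total error. -/
lemma abs_sum_block_le (q : ℕ) (hq : 0 < q) (a : ℤ) (h : IsCoprime a (q : ℤ)) (β D : ℝ)
    (g : ℕ → ℝ) (hg : ∀ t < q, |g t - (β + a * t / q)| ≤ D / q) :
    |∑ t ∈ Finset.range q, ((⌊g t⌋ : ℝ) - g t + 1 / 2)| ≤ 2 * D + 1 / 2 := by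
  have hq' : (0 : ℝ) < q := by exact_mod_cast hq
  have hlin : ∀ γ : ℝ, ∑ t ∈ Finset.range q, (γ + a * t / q) = q * γ + a * (q - 1) / 2 := by
    intro γ
    rw [Finset.sum_add_distrib, ← Finset.sum_div, ← Finset.mul_sum, sum_range_natCast_real]
    simp only [Finset.sum_const, Finset.card_range, nsmul_eq_mul]
    field_simp
  have hg' : ∀ t ∈ Finset.range q, (β - D / q) + a * t / q ≤ g t ∧
      g t ≤ (β + D / q) + a * t / q := by
    intro t ht
    have := abs_le.1 (hg t (Finset.mem_range.1 ht))
    constructor <;> linarith [this.1, this.2]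
  have u1 := Finset.sum_le_sum fun t ht => (hg' t ht).1
  have u2 := Finset.sum_le_sum fun t ht => (hg' t ht).2
  have u3 : ∑ t ∈ Finset.range q, (⌊(β - D / q) + a * t / q⌋ : ℝ)
      ≤ ∑ t ∈ Finset.range q, (⌊g t⌋ : ℝ) := Finset.sum_le_sum fun t ht => by
    exact_mod_cast Int.floor_mono (hg' t ht).1
  have u4 : ∑ t ∈ Finset.range q, (⌊g t⌋ : ℝ)
      ≤ ∑ t ∈ Finset.range q, (⌊(β + D / q) + a * t / q⌋ : ℝ) :=
    Finset.sum_le_sum fun t ht => by exact_mod_cast Int.floor_mono (hg' t ht).2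
  rw [hlin] at u1 u2
  rw [sum_floor_linear q hq a h] at u3 u4
  have e1 := Int.floor_le ((q : ℝ) * (β + D / q))
  have e2 := Int.lt_floor_add_one ((q : ℝ) * (β - D / q))
  have e3 : (q : ℝ) * (β + D / q) = q * β + D := by field_simp
  have e4 : (q : ℝ) * (β - D / q) = q * β - D := by field_simp
  rw [e3] at e1 u2 u4
  rw [e4] at e2 u1 u3
  rw [Finset.sum_add_distrib, Finset.sum_sub_distrib]
  simp only [Finset.sum_const, Finset.card_range, nsmul_eq_mul]
  rw [abs_le]
  constructor <;> linarith

/-- Greedy decomposition of `[n, M)`: bad indices are consumed one at a time, good ones in blocks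
of length at least `G` whose sum is at most `B`; the last, incomplete block has length at
most `Q`. -/
lemma abs_sum_greedy_le (h : ℕ → ℝ) (hh : ∀ n, |h n| ≤ 1) (M G Q : ℕ) (hG : 0 < G) (B : ℝ)
    (hB : 0 ≤ B) (bad : Finset ℕ)
    (hgood : ∀ n < M, n ∉ bad → ∃ q, G ≤ q ∧ q ≤ Q ∧
      (n + q ≤ M → |∑ t ∈ Finset.range q, h (n + t)| ≤ B)) (n : ℕ) (hn : n ≤ M) :
    |∑ i ∈ Finset.Ico n M, h i| ≤ B * (M - n) / G + (bad.filter (n ≤ ·)).card + Q := by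
  have hG' : (0 : ℝ) < G := by exact_mod_cast hG
  induction hk : M - n using Nat.strong_induction_on generalizing n with
  | _ k ih =>
    have hnM : (n : ℝ) ≤ M := by exact_mod_cast hn
    have hBn : 0 ≤ B * (M - n) / G := by
      apply div_nonneg (mul_nonneg hB (by linarith)) hG'.le
    rcases hn.eq_or_lt with rfl | hlt
    · simp only [Finset.Ico_self, Finset.sum_empty, abs_zero]
      positivity
    by_cases hb : n ∈ bad
    · have h1 := ih (M - (n + 1)) (by omega) (n + 1) (by omega) rfl
      rw [Finset.sum_eq_sum_Ico_succ_bot hlt]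
      have h2 : (bad.filter (n + 1 ≤ ·)).card + 1 ≤ (bad.filter (n ≤ ·)).card := by
        rw [Nat.succ_le_iff]
        apply Finset.card_lt_card
        rw [Finset.ssubset_iff_of_subset]
        · exact ⟨n, by simp [hb], by simp⟩
        · intro y; simp only [Finset.mem_filter]; rintro ⟨h3, h4⟩; exact ⟨h3, by omega⟩
      have h2' : ((bad.filter (n + 1 ≤ ·)).card : ℝ) + 1 ≤ (bad.filter (n ≤ ·)).card := by
        exact_mod_cast h2
      have h3 : B * (M - (n + 1 : ℕ)) / G ≤ B * (M - n) / G := by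
        push_cast; gcongr; linarith
      have h4 := abs_add_le (h n) (∑ k ∈ Finset.Ico (n + 1) M, h k)
      linarith [hh n]
    · obtain ⟨q, hGq, hqQ, hq⟩ := hgood n hlt hb
      by_cases hqM : n + q ≤ M
      · have h1 := ih (M - (n + q)) (by omega) (n + q) hqM rfl
        have h2 := hq hqM
        rw [← Finset.sum_Ico_consecutive h (Nat.le_add_right n q) hqM]
        have h3 : ∑ i ∈ Finset.Ico n (n + q), h i = ∑ t ∈ Finset.range q, h (n + t) := by
          rw [Finset.sum_Ico_eq_sum_range]; simp
        rw [h3]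
        have h4 : ((bad.filter (n + q ≤ ·)).card : ℝ) ≤ (bad.filter (n ≤ ·)).card := by
          exact_mod_cast Finset.card_le_card fun y => by
            simp only [Finset.mem_filter]; rintro ⟨h3, h4⟩; exact ⟨h3, by omega⟩
        have h5 : B * (M - (n + q : ℕ)) / G + B ≤ B * (M - n) / G := by
          have : B * (M - (n + q : ℕ)) / G + B = B * (M - n - q + G) / G := by
            push_cast; field_simp; ring
          rw [this]
          have : (G : ℝ) ≤ q := by exact_mod_cast hGq
          gcongr; linarith
        have h6 := abs_add_le (∑ t ∈ Finset.range q, h (n + t)) (∑ k ∈ Finset.Ico (n + q) M, h k)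
        linarith
      · have h1 : |∑ i ∈ Finset.Ico n M, h i| ≤ ∑ i ∈ Finset.Ico n M, (1 : ℝ) :=
          (Finset.abs_sum_le_sum_abs _ _).trans (Finset.sum_le_sum fun i _ => hh i)
        simp only [Finset.sum_const, Nat.card_Ico, nsmul_eq_mul, mul_one] at h1
        have h2 : ((M - n : ℕ) : ℝ) ≤ Q := by exact_mod_cast (by omega : M - n ≤ Q)
        have : (0 : ℝ) ≤ (bad.filter (n ≤ ·)).card := by positivity
        linarith

/-! ### Equidistribution along the circle -/

lemma sqrt_half_le_sqrt_sub_sq {x t : ℝ} (ht : 0 ≤ t) (htx : t ≤ √(x / 2)) :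
    √(x / 2) ≤ √(x - t ^ 2) := by
  rcases le_or_gt x 0 with hx | hx
  · rw [Real.sqrt_eq_zero_of_nonpos (by linarith)]; positivity
  · apply Real.sqrt_le_sqrt
    have : t ^ 2 ≤ x / 2 := by
      rw [← Real.sq_sqrt (show 0 ≤ x / 2 by linarith)]; gcongr
    linarith

/-- Second-order Taylor bound for the circle `n ↦ √(x - n ^ 2)` up to the diagonal. -/
lemma circle_taylor {x n t : ℝ} (hx : 0 < x) (hn : 0 ≤ n) (ht : 0 ≤ t)
    (hnt : n + t ≤ √(x / 2)) :
    √(x - (n + t) ^ 2) ≤ √(x - n ^ 2) - t * (n / √(x - n ^ 2)) ∧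
    √(x - n ^ 2) - t * (n / √(x - n ^ 2)) - 2 * t ^ 2 / √(x / 2) ≤ √(x - (n + t) ^ 2) := by
  have hκ : 0 < √(x / 2) := Real.sqrt_pos.2 (by linarith)
  have hκ2 : √(x / 2) ^ 2 = x / 2 := Real.sq_sqrt (by linarith)
  have hf := sqrt_half_le_sqrt_sub_sq hn (by linarith : n ≤ √(x / 2))
  have hg := sqrt_half_le_sqrt_sub_sq (by linarith : 0 ≤ n + t) hnt
  have hf2 : √(x - n ^ 2) ^ 2 = x - n ^ 2 := by
    apply Real.sq_sqrt; nlinarith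
  have hg2 : √(x - (n + t) ^ 2) ^ 2 = x - (n + t) ^ 2 := by
    apply Real.sq_sqrt; nlinarith
  set κ := √(x / 2)
  set f := √(x - n ^ 2)
  set g := √(x - (n + t) ^ 2)
  have hfpos : 0 < f := by linarith
  set s := n / f with hs
  have hsf : s * f = n := by rw [hs]; field_simp
  have hs0 : 0 ≤ s := by positivity
  have hs1 : s ≤ 1 := by rw [hs, div_le_one hfpos]; linarith
  have hlin : 0 ≤ f - t * s := by nlinarith
  -- both sides are compared through the difference of their squares
  have hsq : (f - t * s) ^ 2 - g ^ 2 = t ^ 2 * (1 + s ^ 2) := by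
    rw [hg2]
    have : (f - t * s) ^ 2 = f ^ 2 - 2 * t * (s * f) + t ^ 2 * s ^ 2 := by ring
    rw [this, hsf, hf2]; ring
  have hprod : (f - t * s - g) * (f - t * s + g) = t ^ 2 * (1 + s ^ 2) := by
    rw [← hsq]; ring
  have hpos : 0 < f - t * s + g := by linarith
  have hle : 0 ≤ f - t * s - g := by
    by_contra hneg
    push Not at hneg
    have h1 : (f - t * s - g) * (f - t * s + g) < 0 := mul_neg_of_neg_of_pos hneg hpos
    have h2 : 0 ≤ t ^ 2 * (1 + s ^ 2) := by positivity
    linarith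
  refine ⟨by linarith, ?_⟩
  have h3 : f - t * s - g ≤ 2 * t ^ 2 / κ := by
    rw [le_div_iff₀ hκ]
    calc (f - t * s - g) * κ ≤ (f - t * s - g) * (f - t * s + g) := by gcongr; linarith
      _ = t ^ 2 * (1 + s ^ 2) := hprod
      _ ≤ t ^ 2 * (1 + 1) := by gcongr; nlinarith
      _ = 2 * t ^ 2 := by ring
  linarith

lemma card_le_of_sub_le (s : Finset ℕ) (L : ℝ) (hL : 0 ≤ L)
    (h : ∀ m ∈ s, ∀ n ∈ s, m ≤ n → (n : ℝ) - m ≤ L) : (s.card : ℝ) ≤ L + 1 := by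
  rcases s.eq_empty_or_nonempty with rfl | hs
  · simp; linarith
  · have h1 := h _ (s.min'_mem hs) _ (s.max'_mem hs) (s.min'_le_max' hs)
    have h2 : s ⊆ Finset.Icc (s.min' hs) (s.max' hs) := fun y hy =>
      Finset.mem_Icc.2 ⟨s.min'_le y hy, s.le_max' y hy⟩
    have h3 := Finset.card_le_card h2
    rw [Nat.card_Icc] at h3
    have h4 : s.card + s.min' hs ≤ s.max' hs + 1 := by
      have := s.min'_le_max' hs; omega
    have h5 : (s.card : ℝ) + s.min' hs ≤ s.max' hs + 1 := by exact_mod_cast h4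
    linarith

/-- The absolute slope of the circle grows at rate at least `1 / √x`. -/
lemma circle_slope_sub_ge {x m n : ℝ} (hx : 0 < x) (hm : 0 ≤ m) (hmn : m ≤ n)
    (hn : n ≤ √(x / 2)) :
    (n - m) / √x ≤ n / √(x - n ^ 2) - m / √(x - m ^ 2) := by
  have hκ : 0 < √(x / 2) := Real.sqrt_pos.2 (by linarith)
  have hg := sqrt_half_le_sqrt_sub_sq (hm.trans hmn) hn
  have h1 : √(x - n ^ 2) ≤ √(x - m ^ 2) := Real.sqrt_le_sqrt (by nlinarith)
  have h2 : √(x - m ^ 2) ≤ √x := Real.sqrt_le_sqrt (by nlinarith)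
  have h3 : n / √(x - m ^ 2) ≤ n / √(x - n ^ 2) := by
    apply div_le_div_of_nonneg_left (hm.trans hmn) (by linarith) h1
  have h4 : (n - m) / √x ≤ (n - m) / √(x - m ^ 2) :=
    div_le_div_of_nonneg_left (by linarith) (by linarith) h2
  have h5 := sub_div n m √(x - m ^ 2)
  linarith

/-- The indices below `M` at which the slope of the circle is within `1 / ((Q + 1) b)` of a
rational with denominator `b < G`. -/
def badIndices (x : ℝ) (M G Q : ℕ) : Finset ℕ := by
  classical
  exact (Finset.range M).filter fun n =>
    ∃ r : ℚ, r.den < G ∧ |-(n / √(x - (n : ℝ) ^ 2)) - r| ≤ 1 / ((Q + 1) * r.den)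

/-- There are `O(G ^ 2)` rationals of denominator below `G` near a slope in `[-1, 0]`, and since the
slope is monotone with rate at least `1 / √x`, each is approached within `1 / Q` by at most
`2 √x / Q + 1` indices. -/
lemma card_badIndices_le (x : ℝ) (hx : 0 < x) (M G Q : ℕ) (hG : 0 < G) (hQ : 0 < Q)
    (hM : ∀ n < M, (n : ℝ) ≤ √(x / 2)) :
    ((badIndices x M G Q).card : ℝ) ≤ 5 * G ^ 2 * (2 * √x / Q + 1) := by
  classical
  have hQ' : (0 : ℝ) < Q := by exact_mod_cast hQ
  have hκ : 0 < √(x / 2) := Real.sqrt_pos.2 (by linarith)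
  let fib : ℕ × ℤ → Finset ℕ := fun p => (Finset.range M).filter fun n =>
    |-(n / √(x - (n : ℝ) ^ 2)) - (p.2 / p.1 : ℝ)| ≤ 1 / Q
  have hsub : badIndices x M G Q ⊆
      (Finset.range G ×ˢ Finset.Icc (-(2 * G : ℤ)) (2 * G)).biUnion fib := by
    intro n hn
    simp only [badIndices, Finset.mem_filter, Finset.mem_range] at hn
    obtain ⟨hnM, r, hrG, hr⟩ := hn
    have hden : (1 : ℝ) ≤ r.den := by exact_mod_cast r.pos
    have hf := sqrt_half_le_sqrt_sub_sq (Nat.cast_nonneg n) (hM n hnM)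
    have hs0 : 0 ≤ n / √(x - (n : ℝ) ^ 2) := by positivity
    have hs1 : n / √(x - (n : ℝ) ^ 2) ≤ 1 := by
      rw [div_le_one (by linarith)]; linarith [hM n hnM]
    have hr1 : (1 : ℝ) / ((Q + 1) * r.den) ≤ 1 / Q := by
      apply one_div_le_one_div_of_le hQ'; nlinarith
    have hr2 : (1 : ℝ) / ((Q + 1) * r.den) ≤ 1 := by
      rw [div_le_one (by positivity)]; nlinarith
    have hrr : (r : ℝ) = r.num / r.den := by exact_mod_cast (Rat.num_div_den r).symm
    have hab := abs_le.1 hr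
    have hnum : |(r.num : ℝ)| ≤ 2 * r.den := by
      have : (r.num : ℝ) = r * r.den := by rw [hrr]; field_simp
      rw [this, abs_mul, Nat.abs_cast]
      gcongr
      rw [abs_le]; constructor <;> linarith [hab.1, hab.2]
    have hnum' : |r.num| ≤ 2 * r.den := by exact_mod_cast hnum
    have hnum'' := abs_le.1 hnum'
    simp only [Finset.mem_biUnion, Finset.mem_product, Finset.mem_range, Finset.mem_Icc, fib,
      Finset.mem_filter]
    refine ⟨(r.den, r.num), ⟨hrG, by simp only; omega, by simp only; omega⟩, hnM, ?_⟩
    simp only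
    rw [← hrr]
    exact hr.trans hr1
  have hfib : ∀ p, ((fib p).card : ℝ) ≤ 2 * √x / Q + 1 := by
    intro p
    apply card_le_of_sub_le _ _ (by positivity)
    intro m hm n hn hmn
    simp only [fib, Finset.mem_filter, Finset.mem_range] at hm hn
    have h1 := circle_slope_sub_ge hx (Nat.cast_nonneg m) (Nat.cast_le.2 hmn) (hM n hn.1)
    have h2 := abs_le.1 hm.2
    have h3 := abs_le.1 hn.2
    have h4 : ((n : ℝ) - m) / √x ≤ 2 * (1 / Q) := by linarith [h2.1, h2.2, h3.1, h3.2]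
    rw [div_le_iff₀ (Real.sqrt_pos.2 hx)] at h4
    calc (n : ℝ) - m ≤ 2 * (1 / Q) * √x := h4
      _ = _ := by ring
  have h1 : ((badIndices x M G Q).card : ℝ) ≤
      ∑ p ∈ Finset.range G ×ˢ Finset.Icc (-(2 * G : ℤ)) (2 * G), ((fib p).card : ℝ) := by
    exact_mod_cast (Finset.card_le_card hsub).trans Finset.card_biUnion_le
  refine h1.trans ((Finset.sum_le_sum fun p _ => hfib p).trans ?_)
  rw [Finset.sum_const, Finset.card_product, Finset.card_range, Int.card_Icc, nsmul_eq_mul]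
  have h2 : (2 * (G : ℤ) + 1 - -(2 * (G : ℤ))).toNat ≤ 5 * G := by omega
  have h3 : (G * (2 * (G : ℤ) + 1 - -(2 * (G : ℤ))).toNat : ℕ) ≤ 5 * G ^ 2 := by
    calc _ ≤ G * (5 * G) := Nat.mul_le_mul_left _ h2
      _ = _ := by ring
  have h4 : ((G * (2 * (G : ℤ) + 1 - -(2 * (G : ℤ))).toNat : ℕ) : ℝ) ≤ 5 * G ^ 2 := by
    exact_mod_cast h3
  gcongr

lemma abs_floor_sub_add_half_le (y : ℝ) : |(⌊y⌋ : ℝ) - y + 1 / 2| ≤ 1 := by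
  rw [abs_le]; constructor <;> linarith [Int.floor_le y, Int.lt_floor_add_one y]

/-- Equidistribution of the fractional parts of `√(x - n ^ 2)` for `n` up to the diagonal, with
a free parameter `g`: blocks have length between `g` and `g ^ 3`. The condition on `g ^ 9` keeps
the Taylor error over a block of length `q ≤ g ^ 3` at most `2 / q`. -/
lemma abs_sum_circle_floor_le_aux (x : ℝ) (g : ℕ) (hg : 0 < g) (hgx : (g : ℝ) ^ 9 ≤ √(x / 2)) :
    |∑ n ∈ Finset.range (⌊√(x / 2)⌋₊ + 1),
      ((⌊√(x - (n : ℝ) ^ 2)⌋ : ℝ) - √(x - (n : ℝ) ^ 2) + 1 / 2)| ≤ 40 * (√(x / 2) / g) := by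
  have hg1 : (1 : ℝ) ≤ g := by exact_mod_cast hg
  have hκ1 : 1 ≤ √(x / 2) := (one_le_pow₀ hg1).trans hgx
  have hx : 0 < x := by
    by_contra hx
    rw [Real.sqrt_eq_zero_of_nonpos (by linarith)] at hκ1
    linarith
  set κ := √(x / 2) with hκ
  set M := ⌊κ⌋₊ + 1 with hM
  have hMκ : ∀ n < M, (n : ℝ) ≤ κ := fun n hn =>
    (Nat.cast_le.2 (Nat.lt_succ_iff.1 hn)).trans (Nat.floor_le (by linarith))
  have key := abs_sum_greedy_le (fun n : ℕ => (⌊√(x - (n : ℝ) ^ 2)⌋ : ℝ) - √(x - (n : ℝ) ^ 2) + 1 / 2)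
    (fun n => abs_floor_sub_add_half_le _) M g (g ^ 3) hg 7 (by norm_num)
    (badIndices x M g (g ^ 3)) ?_ 0 (Nat.zero_le _)
  · rw [← Finset.range_eq_Ico] at key
    have hcard : (((badIndices x M g (g ^ 3)).filter (0 ≤ ·)).card : ℝ) ≤
        5 * g ^ 2 * (2 * √x / (g ^ 3 : ℕ) + 1) :=
      (Nat.cast_le.2 (Finset.card_filter_le _ _)).trans (card_badIndices_le x hx M g _ hg (by positivity) hMκ)
    refine key.trans ?_
    have hsx : √x ≤ 2 * κ := by
      rw [Real.sqrt_le_left (by positivity), mul_pow, hκ, Real.sq_sqrt (by linarith)]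
      linarith
    have hMle : (M : ℝ) ≤ 2 * κ := by
      rw [hM]; push_cast; linarith [Nat.floor_le (show 0 ≤ κ by linarith)]
    have h1 : 7 * ((M : ℝ) - (0 : ℕ)) / g ≤ 14 * (κ / g) := by
      calc 7 * ((M : ℝ) - (0 : ℕ)) / g ≤ 7 * (2 * κ) / g := by
            gcongr; simpa using hMle
        _ = _ := by ring
    have h2 : 5 * (g : ℝ) ^ 2 * (2 * √x / (g ^ 3 : ℕ) + 1) ≤ 20 * (κ / g) + 5 * g ^ 2 := by
      calc 5 * (g : ℝ) ^ 2 * (2 * √x / (g ^ 3 : ℕ) + 1)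
          ≤ 5 * (g : ℝ) ^ 2 * (2 * (2 * κ) / (g ^ 3 : ℕ) + 1) := by gcongr
        _ = _ := by push_cast; field_simp; ring
    have h3 : (g : ℝ) ^ 8 ≤ κ / g := by
      rw [le_div_iff₀ (by linarith)]; linarith [pow_succ (g : ℝ) 8]
    have h4 : (g : ℝ) ^ 2 ≤ g ^ 8 := pow_le_pow_right₀ hg1 (by norm_num)
    have h5 : ((g ^ 3 : ℕ) : ℝ) ≤ g ^ 8 := by
      push_cast; exact pow_le_pow_right₀ hg1 (by norm_num)
    linarith
  · intro n hn hbad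
    obtain ⟨r, hr, hrQ⟩ := Real.exists_rat_abs_sub_le_and_den_le
      (-(n / √(x - (n : ℝ) ^ 2))) (show 0 < g ^ 3 by positivity)
    refine ⟨r.den, ?_, hrQ, fun hle => ?_⟩
    · by_contra hlt
      push Not at hlt
      apply hbad
      simp only [badIndices, Finset.mem_filter, Finset.mem_range]
      exact ⟨hn, r, hlt, hr⟩
    have hcop : IsCoprime r.num (r.den : ℤ) := by
      rw [Int.isCoprime_iff_gcd_eq_one]; exact r.reduced
    have hden : (0 : ℝ) < r.den := by exact_mod_cast r.pos
    have hrr : (r : ℝ) = r.num / r.den := by exact_mod_cast (Rat.num_div_den r).symm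
    have hqQ : (r.den : ℝ) ≤ (g : ℝ) ^ 3 := by exact_mod_cast hrQ
    have hblock := abs_sum_block_le r.den r.pos r.num hcop (√(x - (n : ℝ) ^ 2)) 3
      (fun t => √(x - ((n + t : ℕ) : ℝ) ^ 2)) ?_
    · exact hblock.trans (by norm_num)
    intro t ht
    have htr : (t : ℝ) ≤ r.den := by exact_mod_cast ht.le
    have hT := circle_taylor hx (Nat.cast_nonneg n) (Nat.cast_nonneg t)
      (by have := hMκ (n + t) (by omega); push_cast at this; exact this)
    rw [← hκ] at hT
    have h1 : 2 * (t : ℝ) ^ 2 / κ ≤ 2 / r.den := by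
      rw [div_le_div_iff₀ (by linarith) hden]
      have : (t : ℝ) ^ 2 * r.den ≤ κ := by
        calc (t : ℝ) ^ 2 * r.den ≤ (r.den : ℝ) ^ 2 * r.den := by gcongr
          _ = (r.den : ℝ) ^ 3 := by ring
          _ ≤ ((g : ℝ) ^ 3) ^ 3 := by gcongr
          _ = (g : ℝ) ^ 9 := by ring
          _ ≤ κ := hgx
      linarith
    have h2 : |(t : ℝ) * (-(n / √(x - (n : ℝ) ^ 2)) - r)| ≤ 1 / r.den := by
      rw [abs_mul, Nat.abs_cast]
      calc (t : ℝ) * |-(n / √(x - (n : ℝ) ^ 2)) - r|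
          ≤ r.den * (1 / (((g ^ 3 : ℕ) + 1) * r.den)) := by gcongr
        _ = 1 / ((g ^ 3 : ℕ) + 1) := by field_simp
        _ ≤ 1 / r.den := by
            apply one_div_le_one_div_of_le hden; push_cast; linarith
    have h3 := abs_le.1 h2
    have h4 : (r.num : ℝ) * t / r.den = t * r := by rw [hrr]; ring
    have h5 : (3 : ℝ) / r.den = 1 / r.den + 2 / r.den := by ring
    have h6 : 0 ≤ 2 / (r.den : ℝ) := by positivity
    rw [h4, h5]
    push_cast
    rw [abs_le]
    constructor <;> linarith [h3.1, h3.2, hT.1, hT.2]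

/-- The choice `g ≈ √(x / 2) ^ (1 / 9)` in `abs_sum_circle_floor_le_aux`. -/
lemma abs_sum_circle_floor_le (x : ℝ) (hx : 2 ≤ x) :
    |∑ n ∈ Finset.range (⌊√(x / 2)⌋₊ + 1),
      ((⌊√(x - (n : ℝ) ^ 2)⌋ : ℝ) - √(x - (n : ℝ) ^ 2) + 1 / 2)| ≤ 80 * x ^ (4 / 9 : ℝ) := by
  set κ := √(x / 2) with hκ
  have hκ1 : 1 ≤ κ := by rw [hκ]; apply Real.one_le_sqrt.2; linarith
  set y := κ ^ (1 / 9 : ℝ) with hy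
  have hy9 : y ^ 9 = κ := by
    rw [hy, ← Real.rpow_natCast, ← Real.rpow_mul (by linarith)]; norm_num
  have hy1 : 1 ≤ y := Real.one_le_rpow hκ1 (by norm_num)
  have hg0 : 0 < ⌊y⌋₊ := Nat.floor_pos.2 hy1
  have hgy : (⌊y⌋₊ : ℝ) ≤ y := Nat.floor_le (by linarith)
  have hyg : y < ⌊y⌋₊ + 1 := Nat.lt_floor_add_one y
  have hg1 : (1 : ℝ) ≤ ⌊y⌋₊ := by exact_mod_cast hg0
  have h1 := abs_sum_circle_floor_le_aux x ⌊y⌋₊ hg0 (by rw [← hκ, ← hy9]; gcongr)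
  refine h1.trans ?_
  rw [← hκ]
  have h2 : κ / ⌊y⌋₊ ≤ 2 * y ^ 8 := by
    rw [div_le_iff₀ (by linarith), ← hy9]
    have : 0 ≤ y ^ 8 := by positivity
    calc y ^ 9 = y ^ 8 * y := by ring
      _ ≤ y ^ 8 * (2 * ⌊y⌋₊) := by gcongr; linarith
      _ = _ := by ring
  have h3 : y ^ 8 ≤ x ^ (4 / 9 : ℝ) := by
    have e : y ^ 8 = (x / 2) ^ (4 / 9 : ℝ) := by
      rw [hy, hκ, Real.sqrt_eq_rpow, ← Real.rpow_mul (by linarith), ← Real.rpow_natCast,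
        ← Real.rpow_mul (by linarith)]
      norm_num
    rw [e]
    apply Real.rpow_le_rpow (by linarith) (by linarith) (by norm_num)
  linarith

/-! ### The area of the quarter disc -/

/-- An antiderivative of `t ↦ √(x - t ^ 2)` vanishing at `0`. -/
def circlePrim (x t : ℝ) : ℝ := (t * √(x - t ^ 2) + x * arcsin (t / √x)) / 2

lemma hasDerivAt_circlePrim {x t : ℝ} (ht : 0 ≤ t) (htx : t ^ 2 < x) :
    HasDerivAt (circlePrim x) √(x - t ^ 2) t := by
  have hx : 0 < x := lt_of_le_of_lt (sq_nonneg t) htx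
  have hsx : 0 < √x := Real.sqrt_pos.2 hx
  have hf : 0 < √(x - t ^ 2) := Real.sqrt_pos.2 (by linarith)
  have hf2 : √(x - t ^ 2) ^ 2 = x - t ^ 2 := Real.sq_sqrt (by linarith)
  have htlt : t / √x < 1 := by
    rw [div_lt_one hsx]; exact Real.lt_sqrt_of_sq_lt htx
  have hge : 0 ≤ t / √x := by positivity
  have h1 : HasDerivAt (fun t : ℝ => √(x - t ^ 2)) (-(2 * t) / (2 * √(x - t ^ 2))) t := by
    have := ((hasDerivAt_pow 2 t).const_sub x).sqrt (by linarith)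
    simpa using this
  have h2 : HasDerivAt (fun t : ℝ => arcsin (t / √x)) (1 / √(1 - (t / √x) ^ 2) * (1 / √x)) t := by
    have h3 : HasDerivAt (fun t : ℝ => t / √x) (1 / √x) t := (hasDerivAt_id t).div_const √x
    have h4 := Real.hasDerivAt_arcsin (x := t / √x) (by linarith) htlt.ne
    exact h4.comp t h3
  have h3 := ((((hasDerivAt_id t).mul h1).add (h2.const_mul x))).div_const 2
  refine h3.congr_deriv ?_
  have e : √(1 - (t / √x) ^ 2) = √(x - t ^ 2) / √x := by
    rw [← Real.sqrt_div (by linarith)]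
    congr 1
    rw [div_pow, Real.sq_sqrt hx.le]; field_simp
  rw [e]
  simp only [id]
  field_simp
  nlinarith

lemma circlePrim_zero (x : ℝ) : circlePrim x 0 = 0 := by simp [circlePrim]

lemma circlePrim_diag {x : ℝ} (hx : 0 < x) : 2 * circlePrim x √(x / 2) = x / 2 + π * x / 4 := by
  have h1 : √(x / 2) ^ 2 = x / 2 := Real.sq_sqrt (by linarith)
  have h2 : x - √(x / 2) ^ 2 = x / 2 := by rw [h1]; ring
  have h3 : arcsin (√(x / 2) / √x) = π / 4 := by
    rw [← Real.sqrt_div (by linarith)]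
    apply Real.arcsin_eq_of_sin_eq
    · rw [Real.sin_pi_div_four, show x / 2 / x = 2 / 2 ^ 2 by field_simp,
        Real.sqrt_div (by norm_num), Real.sqrt_sq (by norm_num)]
    · constructor <;> linarith [Real.pi_pos]
  rw [circlePrim, h2, h3, ← sq, h1]; ring

lemma sq_lt_of_le_sqrt_half {x t : ℝ} (hx : 0 < x) (ht : 0 ≤ t) (htx : t ≤ √(x / 2)) :
    t ^ 2 < x := by
  have : t ^ 2 ≤ x / 2 := by
    rw [← Real.sq_sqrt (show 0 ≤ x / 2 by linarith)]; gcongr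
  linarith

/-- Trapezoid rule on a unit interval; both the integral and the trapezoid are compared with the
tangent line at the left endpoint. -/
lemma trapezoid_step {x n : ℝ} (hx : 0 < x) (hn : 0 ≤ n) (hn1 : n + 1 ≤ √(x / 2)) :
    |circlePrim x (n + 1) - circlePrim x n - (√(x - n ^ 2) + √(x - (n + 1) ^ 2)) / 2|
      ≤ 2 / √(x / 2) := by
  have hκ : 0 < √(x / 2) := Real.sqrt_pos.2 (by linarith)
  set s := n / √(x - n ^ 2)
  have hd : ∀ t ∈ Set.Icc (0 : ℝ) 1,
      HasDerivAt (fun t => circlePrim x (n + t) - (t * √(x - n ^ 2) - t ^ 2 / 2 * s))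
        (√(x - (n + t) ^ 2) - (√(x - n ^ 2) - t * s)) t := by
    intro t ht
    have h1 := (hasDerivAt_circlePrim (x := x) (t := n + t) (by linarith [ht.1])
      (sq_lt_of_le_sqrt_half hx (by linarith [ht.1]) (by linarith [ht.2]))).comp_const_add n t
    have h2 := ((hasDerivAt_id t).mul_const √(x - n ^ 2)).sub
      (((hasDerivAt_pow 2 t).div_const 2).mul_const s)
    refine (h1.sub h2).congr_deriv ?_
    simp
  obtain ⟨t, ht, h⟩ := exists_hasDerivAt_eq_slope
    (fun t => circlePrim x (n + t) - (t * √(x - n ^ 2) - t ^ 2 / 2 * s)) _ zero_lt_one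
    (fun t ht => (hd t ht).continuousAt.continuousWithinAt)
    (fun t ht => hd t ⟨ht.1.le, ht.2.le⟩)
  have h1 := circle_taylor hx hn ht.1.le (by linarith [ht.2])
  have h2 := circle_taylor hx hn zero_le_one hn1
  have h3 : 2 * t ^ 2 / √(x / 2) ≤ 2 / √(x / 2) := by
    gcongr; nlinarith [ht.1, ht.2]
  have h4 : 0 ≤ 2 / √(x / 2) := by positivity
  norm_num at h
  rw [one_pow, mul_one, one_mul] at h2
  rw [abs_le]
  constructor <;> linarith [h1.1, h1.2, h2.1, h2.2]

lemma abs_trapezoid_le {x : ℝ} (hx : 0 < x) (k : ℕ) (hk : (k : ℝ) ≤ √(x / 2)) :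
    |circlePrim x k - (∑ n ∈ Finset.range (k + 1), √(x - (n : ℝ) ^ 2)
      - (√x + √(x - (k : ℝ) ^ 2)) / 2)| ≤ k * (2 / √(x / 2)) := by
  induction k with
  | zero => simp [circlePrim_zero]
  | succ k ih =>
    push_cast at hk ⊢
    have h1 := ih (by linarith)
    have h2 := trapezoid_step hx (Nat.cast_nonneg k) hk
    rw [Finset.sum_range_succ]
    push_cast
    have h3 := abs_add_le _ _ |>.trans (add_le_add h1 h2)
    refine (le_of_eq ?_).trans (h3.trans (le_of_eq ?_))
    · congr 1; ring
    · ring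

/-- Comparison of the sum of ordinates below the diagonal with the area of the quarter disc. -/
lemma abs_main_term_le {x : ℝ} (hx : 2 ≤ x) :
    |2 * ∑ n ∈ Finset.range (⌊√(x / 2)⌋₊ + 1), √(x - (n : ℝ) ^ 2) - (⌊√(x / 2)⌋₊ + 1)
      - √x - (⌊√(x / 2)⌋₊ : ℝ) ^ 2 - π * x / 4| ≤ 9 := by
  have hx0 : 0 < x := by linarith
  have hκ : 0 < √(x / 2) := Real.sqrt_pos.2 (by linarith)
  have hκ2 : √(x / 2) ^ 2 = x / 2 := Real.sq_sqrt (by linarith)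
  have hκ1 : 1 ≤ √(x / 2) := Real.one_le_sqrt.2 (by linarith)
  have hdiag := circlePrim_diag hx0
  have hK := Nat.floor_le hκ.le
  have hK' := Nat.lt_floor_add_one √(x / 2)
  set κ := √(x / 2) with hκdef
  have htr := abs_trapezoid_le hx0 ⌊κ⌋₊ (by rw [← hκdef]; exact hK)
  set k : ℝ := (⌊κ⌋₊ : ℝ) with hk
  have hk0 : 0 ≤ k := Nat.cast_nonneg _
  have htr2 : k * (2 / √(x / 2)) ≤ 2 := by
    rw [← hκdef, ← mul_div_assoc, div_le_iff₀ hκ]; linarith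
  have hfup : ∀ t, k ≤ t → √(x - t ^ 2) ≤ κ + 1 := by
    intro t ht
    rw [Real.sqrt_le_left (by linarith)]
    nlinarith
  have hflo : ∀ t, 0 ≤ t → t ≤ κ → κ ≤ √(x - t ^ 2) := fun t h0 h1 =>
    sqrt_half_le_sqrt_sub_sq h0 h1
  have hrest : (κ - k) * κ ≤ circlePrim x κ - circlePrim x k ∧
      circlePrim x κ - circlePrim x k ≤ (κ - k) * (κ + 1) := by
    rcases hK.eq_or_lt with h | h
    · rw [h]; simp
    · obtain ⟨t, ht, h1⟩ := exists_hasDerivAt_eq_slope (circlePrim x) _ h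
        (fun t ht => (hasDerivAt_circlePrim (hk0.trans ht.1)
          (sq_lt_of_le_sqrt_half hx0 (hk0.trans ht.1) ht.2)).continuousAt.continuousWithinAt)
        (fun t ht => hasDerivAt_circlePrim (hk0.trans ht.1.le)
          (sq_lt_of_le_sqrt_half hx0 (hk0.trans ht.1.le) ht.2.le))
      rw [eq_div_iff (by linarith)] at h1
      have h2 := hfup t ht.1.le
      have h3 := hflo t (hk0.trans ht.1.le) ht.2.le
      rw [← h1]
      constructor <;> nlinarith
  have h5 := hfup k le_rfl
  have h6 := hflo k hk0 hK
  have h7 := abs_le.1 (htr.trans htr2)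
  have h8 : 0 ≤ (κ - k) * (1 - (κ - k)) := by nlinarith
  have h9 : (κ - k) * (1 - (κ - k)) ≤ 1 := by nlinarith
  rw [abs_le]
  constructor <;> nlinarith [h7.1, h7.2, hrest.1, hrest.2]

/-! ### Lattice points in the quarter disc -/

/-- The lattice points `(c, d)` with `c ≥ 1`, `d ≥ 0` and `c ^ 2 + d ^ 2 ≤ N`. This half-open
quadrant is a fundamental domain for the rotation by a right angle on nonzero lattice points. -/
def quadrantPts (N : ℕ) : Finset (ℕ × ℕ) :=
  (Finset.Icc 1 N ×ˢ Finset.range (N + 1)).filter fun p => p.1 ^ 2 + p.2 ^ 2 ≤ N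

lemma mem_quadrantPts {N : ℕ} {p : ℕ × ℕ} :
    p ∈ quadrantPts N ↔ 1 ≤ p.1 ∧ p.1 ^ 2 + p.2 ^ 2 ≤ N := by
  simp only [quadrantPts, Finset.mem_filter, Finset.mem_product, Finset.mem_Icc,
    Finset.mem_range]
  constructor
  · rintro ⟨⟨⟨h1, -⟩, -⟩, h2⟩; exact ⟨h1, h2⟩
  · rintro ⟨h1, h2⟩
    have h3 : p.1 ≤ p.1 ^ 2 := Nat.le_self_pow (by norm_num) _
    have h4 : p.2 ≤ p.2 ^ 2 := Nat.le_self_pow (by norm_num) _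
    exact ⟨⟨⟨h1, by omega⟩, by omega⟩, h2⟩

/-- Here `K = ⌊√(N / 2)⌋`. Points with `d ≤ K` are counted by fixing `d`; the others have `c ≤ K`
and are counted by fixing `c`. -/
lemma card_quadrantPts (N K : ℕ) (hK : ∀ k, k ≤ K ↔ 2 * k ^ 2 ≤ N) :
    (quadrantPts N).card + Nat.sqrt N + K ^ 2
      = 2 * ∑ n ∈ Finset.range (K + 1), Nat.sqrt (N - n ^ 2) := by
  have hle : ∀ n ≤ K, ∀ m, n ^ 2 + m ^ 2 ≤ N ↔ m ≤ Nat.sqrt (N - n ^ 2) := by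
    intro n hn m
    have := (hK n).1 hn
    rw [Nat.le_sqrt']; omega
  have hKs : ∀ n ≤ K, K ≤ Nat.sqrt (N - n ^ 2) := by
    intro n hn
    rw [← hle n hn]
    have := (hK n).1 hn
    have := (hK K).1 le_rfl
    omega
  have h1 : ((quadrantPts N).filter (fun p => p.2 ≤ K)).card
      = ∑ d ∈ Finset.range (K + 1), Nat.sqrt (N - d ^ 2) := by
    rw [Finset.card_eq_sum_card_fiberwise (f := Prod.snd) (t := Finset.range (K + 1))]
    · apply Finset.sum_congr rfl
      intro d hd
      have hd' : d ≤ K := by simpa [Nat.lt_succ_iff] using hd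
      have : (((quadrantPts N).filter (fun p => p.2 ≤ K)).filter fun p => p.2 = d)
          = (Finset.Icc 1 (Nat.sqrt (N - d ^ 2))).image fun c => (c, d) := by
        ext ⟨c, e⟩
        simp only [Finset.mem_filter, mem_quadrantPts, Finset.mem_image, Finset.mem_Icc,
          Prod.mk.injEq]
        constructor
        · rintro ⟨⟨⟨a1, a2⟩, a3⟩, rfl⟩
          exact ⟨c, ⟨a1, (hle e a3 c).1 (by omega)⟩, rfl, rfl⟩
        · rintro ⟨c', ⟨a1, a2⟩, rfl, rfl⟩
          have := (hle d hd' c').2 a2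
          exact ⟨⟨⟨a1, by omega⟩, hd'⟩, rfl⟩
      rw [this, Finset.card_image_of_injective _ fun a b hab => (Prod.mk.inj hab).1,
        Nat.card_Icc]; omega
    · intro p hp
      simp only [Finset.coe_filter, Set.mem_ofPred_eq] at hp
      simp only [Finset.coe_range, Set.mem_Iio]; omega
  have h2 : ((quadrantPts N).filter (fun p => ¬ p.2 ≤ K)).card
      = ∑ c ∈ Finset.Ico 1 (K + 1), (Nat.sqrt (N - c ^ 2) - K) := by
    rw [Finset.card_eq_sum_card_fiberwise (f := Prod.fst) (t := Finset.Ico 1 (K + 1))]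
    · apply Finset.sum_congr rfl
      intro c hc
      rw [Finset.mem_Ico] at hc
      have : (((quadrantPts N).filter (fun p => ¬ p.2 ≤ K)).filter fun p => p.1 = c)
          = (Finset.Ioc K (Nat.sqrt (N - c ^ 2))).image fun d => (c, d) := by
        ext ⟨e, d⟩
        simp only [Finset.mem_filter, mem_quadrantPts, Finset.mem_image, Finset.mem_Ioc,
          Prod.mk.injEq]
        constructor
        · rintro ⟨⟨⟨a1, a2⟩, a3⟩, rfl⟩
          exact ⟨d, ⟨by omega, (hle e (by omega) d).1 a2⟩, rfl, rfl⟩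
        · rintro ⟨d', ⟨a1, a2⟩, rfl, rfl⟩
          have := (hle c (by omega) d').2 a2
          exact ⟨⟨⟨hc.1, by omega⟩, by omega⟩, rfl⟩
      rw [this, Finset.card_image_of_injective _ fun a b hab => (Prod.mk.inj hab).2,
        Nat.card_Ioc]
    · intro p hp
      simp only [Finset.coe_filter, Set.mem_ofPred_eq, mem_quadrantPts] at hp
      simp only [Finset.coe_Ico, Set.mem_Ico]
      refine ⟨hp.1.1, ?_⟩
      by_contra hcon
      have e1 : ¬ 2 * (K + 1) ^ 2 ≤ N := by rw [← hK]; omega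
      have e2 : (K + 1) ^ 2 ≤ p.1 ^ 2 := Nat.pow_le_pow_left (by omega) 2
      have e3 : (K + 1) ^ 2 ≤ p.2 ^ 2 := Nat.pow_le_pow_left (by omega) 2
      omega
  have h3 : ∑ c ∈ Finset.Ico 1 (K + 1), (Nat.sqrt (N - c ^ 2) - K) + K ^ 2
      = ∑ c ∈ Finset.Ico 1 (K + 1), Nat.sqrt (N - c ^ 2) := by
    have e : K ^ 2 = ∑ c ∈ Finset.Ico 1 (K + 1), K := by simp [sq]
    rw [e, ← Finset.sum_add_distrib]
    apply Finset.sum_congr rfl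
    intro c hc
    rw [Finset.mem_Ico] at hc
    have := hKs c (by omega)
    omega
  have h4 : Nat.sqrt N + ∑ c ∈ Finset.Ico 1 (K + 1), Nat.sqrt (N - c ^ 2)
      = ∑ c ∈ Finset.range (K + 1), Nat.sqrt (N - c ^ 2) := by
    rw [Finset.range_eq_Ico, Finset.sum_eq_sum_Ico_succ_bot (Nat.succ_pos K)]
    simp
  have h5 := Finset.card_filter_add_card_filter_not (s := quadrantPts N) (fun p => p.2 ≤ K)
  omega

/-- Gauss circle problem with a power saving over the trivial error `√N`. -/
lemma abs_card_quadrantPts_sub_le (N : ℕ) :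
    |((quadrantPts N).card : ℝ) - π * N / 4| ≤ 170 * (N : ℝ) ^ (4 / 9 : ℝ) := by
  rcases Nat.lt_or_ge N 2 with hN | hN
  · interval_cases N
    · have : quadrantPts 0 = ∅ := by decide
      simp [this]
    · have : (quadrantPts 1).card = 1 := by decide
      rw [this]
      simp only [Nat.cast_one, Real.one_rpow]
      rw [abs_le]; constructor <;> linarith [Real.pi_pos, Real.pi_le_four]
  have hx : (2 : ℝ) ≤ N := by exact_mod_cast hN
  have h1 := abs_le.1 (abs_sum_circle_floor_le N hx)
  have h2 := abs_le.1 (abs_main_term_le hx)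
  set K := ⌊√((N : ℝ) / 2)⌋₊ with hKdef
  have hK : ∀ k, k ≤ K ↔ 2 * k ^ 2 ≤ N := by
    intro k
    rw [hKdef, Nat.le_floor_iff (Real.sqrt_nonneg _), Real.le_sqrt (Nat.cast_nonneg k),
      le_div_iff₀ (by norm_num), mul_comm]
    · exact_mod_cast Iff.rfl
    · positivity
  have h3 := card_quadrantPts N K hK
  have h4 : ∀ n ∈ Finset.range (K + 1), (⌊√((N : ℝ) - (n : ℝ) ^ 2)⌋ : ℝ)
      = Nat.sqrt (N - n ^ 2) := by
    intro n hn
    have hn' := (hK n).1 (by simpa [Nat.lt_succ_iff] using hn)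
    have : (N : ℝ) - (n : ℝ) ^ 2 = ((N - n ^ 2 : ℕ) : ℝ) := by
      rw [Nat.cast_sub (by omega)]; push_cast; ring
    rw [this, Real.floor_real_sqrt_eq_nat_sqrt]; simp
  have h5 : ((quadrantPts N).card : ℝ) + Nat.sqrt N + (K : ℝ) ^ 2
      = 2 * ∑ n ∈ Finset.range (K + 1), (⌊√((N : ℝ) - (n : ℝ) ^ 2)⌋ : ℝ) := by
    rw [Finset.sum_congr rfl h4]; exact_mod_cast h3
  have h6 : (Nat.sqrt N : ℝ) ≤ √N := Real.nat_sqrt_le_real_sqrt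
  have h7 : √(N : ℝ) ≤ Nat.sqrt N + 1 := Real.real_sqrt_le_nat_sqrt_succ
  rw [Finset.sum_add_distrib, Finset.sum_sub_distrib] at h1
  simp only [Finset.sum_const, Finset.card_range, nsmul_eq_mul] at h1
  push_cast at h1
  have h8 : 1 ≤ (N : ℝ) ^ (4 / 9 : ℝ) := Real.one_le_rpow (by linarith) (by norm_num)
  rw [abs_le]
  constructor <;> linarith [h1.1, h1.2, h2.1, h2.2]

/-! ### Coprime lattice points -/

/-- The coprime pairs among `quadrantPts N`. -/
def primPts (N : ℕ) : Finset (ℕ × ℕ) := (quadrantPts N).filter fun p => p.1.Coprime p.2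

lemma card_filter_dvd_quadrantPts (N k : ℕ) (hk : 0 < k) :
    ((quadrantPts N).filter fun p => k ∣ p.1.gcd p.2).card
      = (quadrantPts (N / k ^ 2)).card := by
  have hk2 : 0 < k ^ 2 := by positivity
  have hmem : ∀ c d, (k * c) ^ 2 + (k * d) ^ 2 ≤ N ↔ c ^ 2 + d ^ 2 ≤ N / k ^ 2 := by
    intro c d
    rw [Nat.le_div_iff_mul_le hk2]
    have : (k * c) ^ 2 + (k * d) ^ 2 = (c ^ 2 + d ^ 2) * k ^ 2 := by ring
    rw [this]
  have himg : ((quadrantPts N).filter fun p => k ∣ p.1.gcd p.2)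
      = (quadrantPts (N / k ^ 2)).image fun p => (k * p.1, k * p.2) := by
    ext ⟨c, d⟩
    simp only [Finset.mem_filter, mem_quadrantPts, Finset.mem_image, Prod.mk.injEq,
      Prod.exists, Nat.dvd_gcd_iff]
    constructor
    · rintro ⟨⟨h1, h2⟩, ⟨c', rfl⟩, ⟨d', rfl⟩⟩
      exact ⟨c', d', ⟨Nat.pos_of_mul_pos_left h1, (hmem _ _).1 h2⟩, rfl, rfl⟩
    · rintro ⟨c', d', ⟨h1, h2⟩, rfl, rfl⟩
      exact ⟨⟨Nat.mul_pos hk h1, (hmem _ _).2 h2⟩, dvd_mul_right _ _, dvd_mul_right _ _⟩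
  rw [himg, Finset.card_image_of_injective]
  rintro ⟨a, b⟩ ⟨c, d⟩ h
  simp only [Prod.mk.injEq] at h
  exact Prod.ext (Nat.eq_of_mul_eq_mul_left hk h.1) (Nat.eq_of_mul_eq_mul_left hk h.2)

lemma sum_divisors_moebius_eq (n : ℕ) :
    ∑ k ∈ n.divisors, ArithmeticFunction.moebius k = if n = 1 then 1 else 0 := by
  rw [← ArithmeticFunction.coe_mul_zeta_apply, ArithmeticFunction.moebius_mul_coe_zeta,
    ArithmeticFunction.one_apply]

/-- Möbius inversion over the greatest common divisor. -/
lemma card_primPts (N : ℕ) :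
    ((primPts N).card : ℤ) = ∑ k ∈ Finset.Icc 1 (Nat.sqrt N),
      ArithmeticFunction.moebius k * ((quadrantPts (N / k ^ 2)).card : ℤ) := by
  have h1 : ((primPts N).card : ℤ) = ∑ p ∈ quadrantPts N, ∑ k ∈ Finset.Icc 1 (Nat.sqrt N),
      if k ∣ p.1.gcd p.2 then ArithmeticFunction.moebius k else 0 := by
    rw [primPts, Finset.card_filter]
    push_cast
    apply Finset.sum_congr rfl
    intro p hp
    rw [mem_quadrantPts] at hp
    have hpos : 0 < p.1.gcd p.2 := Nat.gcd_pos_of_pos_left _ hp.1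
    have hgs : p.1.gcd p.2 ≤ Nat.sqrt N := by
      rw [Nat.le_sqrt']
      have := Nat.pow_le_pow_left (Nat.gcd_le_left p.2 hp.1) 2
      omega
    rw [← Finset.sum_filter]
    have : (Finset.Icc 1 (Nat.sqrt N)).filter (fun k => k ∣ p.1.gcd p.2)
        = (p.1.gcd p.2).divisors := by
      ext k
      simp only [Finset.mem_filter, Finset.mem_Icc, Nat.mem_divisors]
      constructor
      · rintro ⟨-, h⟩; exact ⟨h, hpos.ne'⟩
      · rintro ⟨h, -⟩
        exact ⟨⟨Nat.pos_of_dvd_of_pos h hpos, (Nat.le_of_dvd hpos h).trans hgs⟩, h⟩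
    rw [this, sum_divisors_moebius_eq]
  rw [h1, Finset.sum_comm]
  apply Finset.sum_congr rfl
  intro k hk
  rw [← Finset.sum_filter, Finset.sum_const,
    card_filter_dvd_quadrantPts N k (Finset.mem_Icc.1 hk).1, nsmul_eq_mul, mul_comm]

lemma tendsto_sum_moebius_div_sq :
    Tendsto (fun n : ℕ => ∑ k ∈ Finset.Icc 1 n, (ArithmeticFunction.moebius k : ℝ) / (k : ℝ) ^ 2)
      atTop (nhds (6 / π ^ 2)) := by
  have hs : (1 : ℝ) < (2 : ℂ).re := by norm_num
  have h1 := (ArithmeticFunction.LSeriesSummable_moebius_iff.2 hs).LSeriesHasSum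
  have h2 := LSeries_one_mul_Lseries_moebius hs
  rw [LSeries_one_eq_riemannZeta hs, riemannZeta_two] at h2
  have h3 : LSeries (fun n => ((ArithmeticFunction.moebius n : ℤ) : ℂ)) 2
      = ((6 / π ^ 2 : ℝ) : ℂ) := by
    have hpi : (π : ℂ) ≠ 0 := by exact_mod_cast Real.pi_ne_zero
    push_cast
    rw [eq_div_iff (by simp)]
    linear_combination 6 * h2
  rw [h3, LSeriesHasSum] at h1
  have h4 : HasSum (fun k : ℕ => (ArithmeticFunction.moebius k : ℝ) / (k : ℝ) ^ 2)
      (6 / π ^ 2) := by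
    rw [← Complex.hasSum_ofReal]
    convert h1 using 2 with k
    rcases eq_or_ne k 0 with rfl | hk
    · simp
    · rw [LSeries.term_of_ne_zero hk]
      push_cast
      congr 1
      exact_mod_cast (Complex.cpow_natCast (k : ℂ) 2).symm
  have h5 := h4.tendsto_sum_nat.comp (tendsto_add_atTop_nat 1)
  refine h5.congr fun n => ?_
  simp only [Function.comp]
  rw [Finset.range_eq_Ico, Finset.sum_eq_sum_Ico_succ_bot (Nat.succ_pos n)]
  simp
  rfl

lemma abs_sum_moebius_sub_le (s : ℕ) (hs : 0 < s) :
    |∑ k ∈ Finset.Icc 1 s, (ArithmeticFunction.moebius k : ℝ) / (k : ℝ) ^ 2 - 6 / π ^ 2|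
      ≤ 1 / (s : ℝ) := by
  have h := (tendsto_sum_moebius_div_sq.const_sub
    (∑ k ∈ Finset.Icc 1 s, (ArithmeticFunction.moebius k : ℝ) / (k : ℝ) ^ 2)).abs
  apply le_of_tendsto h
  filter_upwards [eventually_ge_atTop s] with n hn
  have e : Finset.Icc 1 n = Finset.Icc 1 s ∪ Finset.Ioc s n := by
    ext k; simp only [Finset.mem_union, Finset.mem_Icc, Finset.mem_Ioc]; omega
  have hd : Disjoint (Finset.Icc 1 s) (Finset.Ioc s n) := by
    rw [Finset.disjoint_left]; intro k; simp only [Finset.mem_Icc, Finset.mem_Ioc]; omega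
  rw [e, Finset.sum_union hd, sub_add_cancel_left, abs_neg]
  refine (Finset.abs_sum_le_sum_abs _ _).trans ?_
  have h1 : ∀ k ∈ Finset.Ioc s n, |(ArithmeticFunction.moebius k : ℝ) / (k : ℝ) ^ 2|
      ≤ ((k : ℝ) ^ 2)⁻¹ := by
    intro k _
    rw [abs_div, abs_of_nonneg (by positivity : (0 : ℝ) ≤ (k : ℝ) ^ 2), div_eq_mul_inv]
    have : |(ArithmeticFunction.moebius k : ℝ)| ≤ 1 := by
      exact_mod_cast ArithmeticFunction.abs_moebius_le_one
    exact mul_le_of_le_one_left (by positivity) this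
  refine (Finset.sum_le_sum h1).trans ((sum_Ioc_inv_sq_le_sub hs.ne' hn).trans ?_)
  have : (0 : ℝ) ≤ (n : ℝ)⁻¹ := by positivity
  rw [one_div]; linarith

lemma sum_rpow_le (s : ℕ) :
    ∑ k ∈ Finset.Icc 1 s, ((k : ℝ) ^ (8 / 9 : ℝ))⁻¹ ≤ 9 * (s : ℝ) ^ (1 / 9 : ℝ) := by
  induction s with
  | zero => simp
  | succ k ih =>
    rw [Finset.sum_Icc_succ_top (by omega)]
    refine (add_le_add_left ih _).trans ?_
    set v := (k : ℝ) ^ (1 / 9 : ℝ) with hv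
    set u := ((k + 1 : ℕ) : ℝ) ^ (1 / 9 : ℝ) with hu
    have hv0 : 0 ≤ v := by positivity
    have hu0 : 0 < u := by positivity
    have hvu : v ≤ u := by
      rw [hv, hu]; gcongr; simp
    have hu9 : u ^ 9 = k + 1 := by
      rw [hu, ← Real.rpow_natCast, ← Real.rpow_mul (by positivity)]; norm_num
    have hv9 : v ^ 9 = k := by
      rw [hv, ← Real.rpow_natCast, ← Real.rpow_mul (by positivity)]; norm_num
    have hu8 : ((k + 1 : ℕ) : ℝ) ^ (8 / 9 : ℝ) = u ^ 8 := by
      rw [hu, ← Real.rpow_natCast, ← Real.rpow_mul (by positivity)]; norm_num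
    rw [hu8]
    -- `1 = u ^ 9 - v ^ 9 ≤ 9 u ^ 8 (u - v)`
    have h1 : (1 : ℝ) ≤ 9 * u ^ 8 * (u - v) := by
      have e : (1 : ℝ) = (u - v) * (u ^ 8 + u ^ 7 * v + u ^ 6 * v ^ 2 + u ^ 5 * v ^ 3
          + u ^ 4 * v ^ 4 + u ^ 3 * v ^ 5 + u ^ 2 * v ^ 6 + u * v ^ 7 + v ^ 8) := by
        have : (1 : ℝ) = u ^ 9 - v ^ 9 := by rw [hu9, hv9]; ring
        rw [this]; ring
      have b : u ^ 8 + u ^ 7 * v + u ^ 6 * v ^ 2 + u ^ 5 * v ^ 3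
          + u ^ 4 * v ^ 4 + u ^ 3 * v ^ 5 + u ^ 2 * v ^ 6 + u * v ^ 7 + v ^ 8
          ≤ u ^ 8 + u ^ 7 * u + u ^ 6 * u ^ 2 + u ^ 5 * u ^ 3
          + u ^ 4 * u ^ 4 + u ^ 3 * u ^ 5 + u ^ 2 * u ^ 6 + u * u ^ 7 + u ^ 8 := by
        gcongr
      have := mul_le_mul_of_nonneg_left b (sub_nonneg.2 hvu)
      rw [← e] at this
      linarith
    have h2 : (u ^ 8)⁻¹ ≤ 9 * (u - v) := by
      rw [inv_le_iff_one_le_mul₀ (by positivity)]; linarith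
    linarith

/-- Since the Gauss circle error `N ^ (4 / 9)` has exponent below `1 / 2`, its sum over the quotients
`N / k ^ 2` with `k ≤ √N` is `O(√N)` without a logarithm. -/
lemma abs_card_primPts_sub_le (N : ℕ) (hN : 0 < N) :
    |((primPts N).card : ℝ) - 3 / (2 * π) * N| ≤ 2000 * √N := by
  have hN' : (1 : ℝ) ≤ N := by exact_mod_cast hN
  set s := Nat.sqrt N with hs
  have hs0 : 0 < s := Nat.sqrt_pos.2 hN
  have hs1 : (1 : ℝ) ≤ s := by exact_mod_cast hs0
  have hsle : (s : ℝ) ≤ √N := Real.nat_sqrt_le_real_sqrt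
  have hsge : √(N : ℝ) ≤ s + 1 := Real.real_sqrt_le_nat_sqrt_succ
  have hpi := Real.pi_pos
  have hpi4 := Real.pi_le_four
  have hcard : ((primPts N).card : ℝ) = ∑ k ∈ Finset.Icc 1 s,
      (ArithmeticFunction.moebius k : ℝ) * ((quadrantPts (N / k ^ 2)).card : ℝ) := by
    exact_mod_cast card_primPts N
  have hmain : |π * N / 4 * ∑ k ∈ Finset.Icc 1 s, (ArithmeticFunction.moebius k : ℝ) / (k : ℝ) ^ 2
      - 3 / (2 * π) * N| ≤ 2 * √N := by
    have e : 3 / (2 * π) * N = π * N / 4 * (6 / π ^ 2) := by field_simp; norm_num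
    rw [e, ← mul_sub, abs_mul, abs_of_nonneg (by positivity)]
    calc π * N / 4 * _ ≤ π * N / 4 * (1 / s) := by gcongr; exact abs_sum_moebius_sub_le s hs0
      _ ≤ 4 * N / 4 * (1 / s) := by gcongr
      _ = N / s := by ring
      _ ≤ 2 * √N := by
        rw [div_le_iff₀ (by linarith)]
        nlinarith [Real.mul_self_sqrt (show (0 : ℝ) ≤ N by linarith), Real.sqrt_nonneg (N : ℝ)]
  have hterm : ∀ k ∈ Finset.Icc 1 s,
      |(ArithmeticFunction.moebius k : ℝ) * ((quadrantPts (N / k ^ 2)).card : ℝ)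
        - π * N / 4 * ((ArithmeticFunction.moebius k : ℝ) / (k : ℝ) ^ 2)|
      ≤ 1 + 170 * (N : ℝ) ^ (4 / 9 : ℝ) * ((k : ℝ) ^ (8 / 9 : ℝ))⁻¹ := by
    intro k hk
    have hk0 : (0 : ℝ) < k := by exact_mod_cast (Finset.mem_Icc.1 hk).1
    have hmu : |(ArithmeticFunction.moebius k : ℝ)| ≤ 1 := by
      exact_mod_cast ArithmeticFunction.abs_moebius_le_one
    have e : (ArithmeticFunction.moebius k : ℝ) * ((quadrantPts (N / k ^ 2)).card : ℝ)
        - π * N / 4 * ((ArithmeticFunction.moebius k : ℝ) / (k : ℝ) ^ 2)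
        = (ArithmeticFunction.moebius k : ℝ)
          * (((quadrantPts (N / k ^ 2)).card : ℝ) - π / 4 * (N / (k : ℝ) ^ 2)) := by ring
    rw [e, abs_mul]
    refine (mul_le_of_le_one_left (abs_nonneg _) hmu).trans ?_
    have h1 := abs_le.1 (abs_card_quadrantPts_sub_le (N / k ^ 2))
    have h2 : ((N / k ^ 2 : ℕ) : ℝ) ≤ N / (k : ℝ) ^ 2 := by
      have := Nat.cast_div_le (α := ℝ) (m := N) (n := k ^ 2)
      push_cast at this ⊢; exact this
    have h3 : (N : ℝ) / (k : ℝ) ^ 2 ≤ ((N / k ^ 2 : ℕ) : ℝ) + 1 := by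
      have := Nat.lt_floor_add_one ((N : ℝ) / ((k ^ 2 : ℕ) : ℝ))
      rw [Nat.floor_div_eq_div] at this
      push_cast at this ⊢; exact this.le
    have h4 : ((N / k ^ 2 : ℕ) : ℝ) ^ (4 / 9 : ℝ)
        ≤ (N : ℝ) ^ (4 / 9 : ℝ) * ((k : ℝ) ^ (8 / 9 : ℝ))⁻¹ := by
      calc ((N / k ^ 2 : ℕ) : ℝ) ^ (4 / 9 : ℝ) ≤ (N / (k : ℝ) ^ 2) ^ (4 / 9 : ℝ) := by gcongr
        _ = _ := by
          rw [Real.div_rpow (by positivity) (by positivity), ← Real.rpow_natCast,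
            ← Real.rpow_mul hk0.le, div_eq_mul_inv]
          norm_num
    rw [abs_le]
    constructor <;> nlinarith [h1.1, h1.2]
  have hsum : |((primPts N).card : ℝ) -
      π * N / 4 * ∑ k ∈ Finset.Icc 1 s, (ArithmeticFunction.moebius k : ℝ) / (k : ℝ) ^ 2|
      ≤ √N + 1530 * √N := by
    rw [hcard, Finset.mul_sum, ← Finset.sum_sub_distrib]
    refine (Finset.abs_sum_le_sum_abs _ _).trans ((Finset.sum_le_sum hterm).trans ?_)
    rw [Finset.sum_add_distrib, ← Finset.mul_sum]
    have h1 := sum_rpow_le s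
    have h2 : (s : ℝ) ^ (1 / 9 : ℝ) ≤ (N : ℝ) ^ (1 / 18 : ℝ) := by
      calc (s : ℝ) ^ (1 / 9 : ℝ) ≤ (√N) ^ (1 / 9 : ℝ) := by gcongr
        _ = _ := by
          rw [Real.sqrt_eq_rpow, ← Real.rpow_mul (by positivity)]; norm_num
    have h3 : (N : ℝ) ^ (4 / 9 : ℝ) * (N : ℝ) ^ (1 / 18 : ℝ) = √N := by
      rw [Real.sqrt_eq_rpow, ← Real.rpow_add (by linarith)]; norm_num
    have h4 : 170 * (N : ℝ) ^ (4 / 9 : ℝ) * ∑ k ∈ Finset.Icc 1 s, ((k : ℝ) ^ (8 / 9 : ℝ))⁻¹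
        ≤ 1530 * √N := by
      calc _ ≤ 170 * (N : ℝ) ^ (4 / 9 : ℝ) * (9 * (N : ℝ) ^ (1 / 18 : ℝ)) := by
            gcongr; exact h1.trans (by gcongr)
        _ = 1530 * ((N : ℝ) ^ (4 / 9 : ℝ) * (N : ℝ) ^ (1 / 18 : ℝ)) := by ring
        _ = _ := by rw [h3]
    have h5 : ∑ k ∈ Finset.Icc 1 s, (1 : ℝ) = s := by simp
    rw [h5]
    linarith
  have h1 := abs_le.1 hmain
  have h2 := abs_le.1 hsum
  have h3 := Real.sqrt_nonneg (N : ℝ)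
  rw [abs_le]
  constructor <;> linarith [h1.1, h1.2, h2.1, h2.2]

/-! ### The orbit of `i` -/

lemma smul_I_im (g : Matrix.SpecialLinearGroup (Fin 2) ℤ) :
    (g • UpperHalfPlane.I).im = 1 / ((g 1 0 : ℝ) ^ 2 + (g 1 1 : ℝ) ^ 2) := by
  rw [ModularGroup.im_smul_eq_div_normSq, ModularGroup.denom_apply]
  simp [Complex.normSq_apply]
  ring

/-- An orbit point in the strip is determined by the bottom row of a matrix producing it. -/
lemma smul_I_eq_of_bottom_row (g h : Matrix.SpecialLinearGroup (Fin 2) ℤ)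
    (h0 : g 1 0 = h 1 0) (h1 : g 1 1 = h 1 1)
    (hg : 0 ≤ (g • UpperHalfPlane.I).re ∧ (g • UpperHalfPlane.I).re < 1)
    (hh : 0 ≤ (h • UpperHalfPlane.I).re ∧ (h • UpperHalfPlane.I).re < 1) :
    g • UpperHalfPlane.I = h • UpperHalfPlane.I := by
  have hc : (g * h⁻¹) 1 0 = 0 := by
    simp [Matrix.SpecialLinearGroup.coe_mul, Matrix.SpecialLinearGroup.coe_inv,
      Matrix.mul_apply, Fin.sum_univ_two, Matrix.adjugate_fin_two, h0, h1]
    ring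
  obtain ⟨n, hn⟩ := ModularGroup.exists_eq_T_zpow_of_c_eq_zero hc
  have e := hn (h • UpperHalfPlane.I)
  rw [mul_smul, inv_smul_smul, modular_T_zpow_smul] at e
  have hre : (g • UpperHalfPlane.I).re = n + (h • UpperHalfPlane.I).re := by
    rw [e, UpperHalfPlane.vadd_re]
  have hn0 : n = 0 := by
    have a1 : (n : ℝ) < 1 := by linarith [hg.2, hh.1]
    have a2 : (-1 : ℝ) < n := by linarith [hg.1, hh.2]
    have b1 : n < 1 := by exact_mod_cast a1
    have b2 : -1 < n := by exact_mod_cast a2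
    omega
  rw [e, hn0]; simp

lemma exists_bottom_row_strip (c d : ℕ) (h : c.Coprime d) :
    ∃ g : Matrix.SpecialLinearGroup (Fin 2) ℤ, g 1 0 = c ∧ g 1 1 = d ∧
      0 ≤ (g • UpperHalfPlane.I).re ∧ (g • UpperHalfPlane.I).re < 1 := by
  have hcd : IsCoprime ((![(c : ℤ), (d : ℤ)] : Fin 2 → ℤ) 0) ((![(c : ℤ), (d : ℤ)] : Fin 2 → ℤ) 1) := by
    simpa using Nat.isCoprime_iff_coprime.2 h
  obtain ⟨g, -, hg⟩ := ModularGroup.bottom_row_surj hcd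
  simp only at hg
  refine ⟨ModularGroup.T ^ (-⌊(g • UpperHalfPlane.I).re⌋) * g, ?_, ?_, ?_⟩
  · rw [ModularGroup.T_pow_mul_apply_one, hg]; simp
  · rw [ModularGroup.T_pow_mul_apply_one, hg]; simp
  · rw [mul_smul, modular_T_zpow_smul, UpperHalfPlane.vadd_re]
    push_cast
    constructor <;> linarith [Int.floor_le (g • UpperHalfPlane.I).re,
      Int.lt_floor_add_one (g • UpperHalfPlane.I).re]

lemma mul_S_bottom_row (g : Matrix.SpecialLinearGroup (Fin 2) ℤ) :
    (g * ModularGroup.S) 1 0 = g 1 1 ∧ (g * ModularGroup.S) 1 1 = -g 1 0 := by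
  rw [Matrix.SpecialLinearGroup.coe_mul, ModularGroup.coe_S]
  simp [Matrix.mul_apply, Fin.sum_univ_two]

lemma mul_neg_bottom_row (g σ : Matrix.SpecialLinearGroup (Fin 2) ℤ) (j : Fin 2) :
    (g * -σ) 1 j = -(g * σ) 1 j := by
  rw [mul_neg, Matrix.SpecialLinearGroup.coe_neg, Matrix.neg_apply]

/-- Right multiplication by the stabilizer `{±1, ±S}` of `i` rotates the bottom row, so each
orbit point has exactly one bottom row in the half-open quadrant. -/
lemma orbitICount_eq (δ : ℝ) (hδ : 0 < δ) :
    orbitICount δ = (primPts ⌊δ⁻¹⌋₊).card := by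
  rw [orbitICount, ← Set.ncard_coe_finset]
  symm
  choose! G hG0 hG1 hGs using exists_bottom_row_strip
  have hiff : ∀ g : Matrix.SpecialLinearGroup (Fin 2) ℤ, ∀ c d : ℕ, 1 ≤ c → g 1 0 = c →
      g 1 1 = d → (δ ≤ (g • UpperHalfPlane.I).im ↔ c ^ 2 + d ^ 2 ≤ ⌊δ⁻¹⌋₊) := by
    intro g c d hc h0 h1
    have hpos : (0 : ℝ) < (c : ℝ) ^ 2 + (d : ℝ) ^ 2 := by
      have : (1 : ℝ) ≤ c := by exact_mod_cast hc
      positivity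
    rw [smul_I_im, h0, h1, Nat.le_floor_iff (by positivity)]
    push_cast
    rw [le_div_iff₀ hpos, le_inv_comm₀ hpos hδ, ← one_div, le_div_iff₀ hpos]
  have hmem : ∀ p : ℕ × ℕ, p ∈ (primPts ⌊δ⁻¹⌋₊ : Set (ℕ × ℕ)) ↔
      (1 ≤ p.1 ∧ p.1 ^ 2 + p.2 ^ 2 ≤ ⌊δ⁻¹⌋₊) ∧ p.1.Coprime p.2 := by
    intro p
    simp [primPts, mem_quadrantPts]
  apply Set.ncard_congr (fun p _ => G p.1 p.2 • UpperHalfPlane.I)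
  · intro p hp
    obtain ⟨⟨hp1, hp2⟩, hp3⟩ := (hmem p).1 hp
    exact ⟨⟨_, rfl⟩, (hGs _ _ hp3).1, (hGs _ _ hp3).2,
      (hiff _ _ _ hp1 (hG0 _ _ hp3) (hG1 _ _ hp3)).2 hp2⟩
  · intro p p' hp hp' heq
    obtain ⟨⟨hp1, hp2⟩, hp3⟩ := (hmem p).1 hp
    obtain ⟨⟨hp1', hp2'⟩, hp3'⟩ := (hmem p').1 hp'
    have hst : ((G p'.1 p'.2)⁻¹ * G p.1 p.2) • UpperHalfPlane.I = UpperHalfPlane.I := by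
      rw [mul_smul, heq, inv_smul_smul]
    rw [ModularGroup.stabilizer_I] at hst
    have h0 := hG0 _ _ hp3
    have h1 := hG1 _ _ hp3
    have h0' := hG0 _ _ hp3'
    have h1' := hG1 _ _ hp3'
    obtain ⟨σ, hσ⟩ : ∃ σ, σ = (G p'.1 p'.2)⁻¹ * G p.1 p.2 := ⟨_, rfl⟩
    have hmul : G p.1 p.2 = G p'.1 p'.2 * σ := by rw [hσ]; group
    rw [← hσ] at hst
    rw [hmul] at h0 h1
    obtain ⟨hS0, hS1⟩ := mul_S_bottom_row (G p'.1 p'.2)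
    simp only [Finset.mem_insert, Finset.mem_singleton] at hst
    rcases hst with rfl | rfl | rfl | rfl
    · rw [mul_one] at h0 h1
      exact Prod.ext (by omega) (by omega)
    · rw [mul_neg_bottom_row, mul_one] at h0
      omega
    · omega
    · rw [mul_neg_bottom_row] at h0
      omega
  · rintro z ⟨⟨g, rfl⟩, hz0, hz1, hzδ⟩
    beta_reduce at hz0 hz1 hzδ ⊢
    obtain ⟨h, c, d, hc, h0, h1, hgh⟩ : ∃ h : Matrix.SpecialLinearGroup (Fin 2) ℤ, ∃ c d : ℕ,
        1 ≤ c ∧ h 1 0 = c ∧ h 1 1 = d ∧ h • UpperHalfPlane.I = g • UpperHalfPlane.I := by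
      have hstab : ∀ σ ∈ ({1, -1, ModularGroup.S, -ModularGroup.S} :
          Finset (Matrix.SpecialLinearGroup (Fin 2) ℤ)),
          (g * σ) • UpperHalfPlane.I = g • UpperHalfPlane.I := fun σ hσ => by
        rw [mul_smul, ModularGroup.stabilizer_I.2 hσ]
      have hne : ¬ (g 1 0 = 0 ∧ g 1 1 = 0) := by
        rintro ⟨e0, e1⟩
        have := ModularGroup.bottom_row_coprime g
        rw [e0, e1] at this
        obtain ⟨a, b, hab⟩ := this
        simp at hab
      obtain ⟨σ, hσ, e0, e1⟩ : ∃ σ ∈ ({1, -1, ModularGroup.S, -ModularGroup.S} :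
          Finset (Matrix.SpecialLinearGroup (Fin 2) ℤ)), 1 ≤ (g * σ) 1 0 ∧ 0 ≤ (g * σ) 1 1 := by
        obtain ⟨hS0, hS1⟩ := mul_S_bottom_row g
        rcases (by omega : (1 ≤ g 1 0 ∧ 0 ≤ g 1 1) ∨ (g 1 0 ≤ -1 ∧ g 1 1 ≤ 0) ∨
          (1 ≤ g 1 1 ∧ g 1 0 ≤ 0) ∨ (g 1 1 ≤ -1 ∧ 0 ≤ g 1 0)) with hc | hc | hc | hc
        · exact ⟨1, by simp, by simpa using hc⟩
        · refine ⟨-1, by simp, ?_⟩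
          rw [mul_neg_bottom_row, mul_neg_bottom_row, mul_one]
          omega
        · exact ⟨ModularGroup.S, by simp, by omega⟩
        · refine ⟨-ModularGroup.S, by simp, ?_⟩
          rw [mul_neg_bottom_row, mul_neg_bottom_row]
          omega
      exact ⟨g * σ, ((g * σ) 1 0).toNat, ((g * σ) 1 1).toNat, by omega,
        (Int.toNat_of_nonneg (by omega)).symm, (Int.toNat_of_nonneg e1).symm, hstab σ hσ⟩
    have hcop : c.Coprime d := by
      have := ModularGroup.bottom_row_coprime h
      rw [h0, h1] at this
      exact Nat.isCoprime_iff_coprime.1 this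
    rw [← hgh] at hz0 hz1 hzδ ⊢
    refine ⟨(c, d), (hmem _).2 ⟨⟨hc, (hiff h c d hc h0 h1).1 hzδ⟩, hcop⟩, ?_⟩
    exact smul_I_eq_of_bottom_row _ _ (by rw [hG0 _ _ hcop, h0]) (by rw [hG1 _ _ hcop, h1])
      (hGs _ _ hcop) ⟨hz0, hz1⟩

/-- As `δ > 0` tends to `0`, the number of points in the `SL₂(ℤ)`-orbit of `i` in the
upper half-plane with `0 ≤ Re z < 1` and `Im z ≥ δ` equals `(3/(2π))·δ⁻¹ + O(δ^{-1/2})`. -/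
theorem orbit_of_I_count_asymptotics :
    (fun δ : ℝ => (orbitICount δ : ℝ) - 3 / (2 * π) * δ⁻¹)
      =O[nhdsWithin 0 (Set.Ioi 0)] (fun δ => δ ^ (-(1 / 2 : ℝ))) := by
  apply Asymptotics.IsBigO.of_bound 2001
  have h1 : Set.Ioo (0 : ℝ) 1 ∈ nhdsWithin (0 : ℝ) (Set.Ioi 0) :=
    Ioo_mem_nhdsGT zero_lt_one
  filter_upwards [h1] with δ hδ
  have hX : 1 ≤ δ⁻¹ := (one_le_inv₀ hδ.1).2 hδ.2.le
  have hN : 0 < ⌊δ⁻¹⌋₊ := Nat.floor_pos.2 hX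
  have e : δ ^ (-(1 / 2 : ℝ)) = √(δ⁻¹) := by
    rw [Real.sqrt_eq_rpow, Real.inv_rpow hδ.1.le, Real.rpow_neg hδ.1.le]
  rw [e, orbitICount_eq δ hδ.1, Real.norm_eq_abs, Real.norm_eq_abs,
    abs_of_nonneg (Real.sqrt_nonneg _)]
  have h2 := abs_le.1 (abs_card_primPts_sub_le _ hN)
  have h3 := Nat.floor_le (show 0 ≤ δ⁻¹ by linarith)
  have h4 := Nat.lt_floor_add_one δ⁻¹
  have h5 : √(⌊δ⁻¹⌋₊ : ℝ) ≤ √(δ⁻¹) := Real.sqrt_le_sqrt h3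
  have h6 : 1 ≤ √(δ⁻¹) := Real.one_le_sqrt.2 hX
  have h7 : 3 / (2 * π) ≤ 1 := by
    rw [div_le_one (by positivity)]; linarith [Real.pi_gt_three]
  have h8 : 0 < 3 / (2 * π) := by positivity
  have h9 : 3 / (2 * π) * ⌊δ⁻¹⌋₊ ≤ 3 / (2 * π) * δ⁻¹ := by gcongr
  have h10 : 3 / (2 * π) * δ⁻¹ ≤ 3 / (2 * π) * ⌊δ⁻¹⌋₊ + 1 := by
    calc 3 / (2 * π) * δ⁻¹ ≤ 3 / (2 * π) * (⌊δ⁻¹⌋₊ + 1) := by gcongr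
      _ = 3 / (2 * π) * ⌊δ⁻¹⌋₊ + 3 / (2 * π) := by ring
      _ ≤ _ := by linarith
  rw [abs_le]
  constructor <;> linarith [h2.1, h2.2]
end
end
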